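/- Let n ≥ 2 and lambda = (lambda_1 > ... > lambda_n > 0) a strict partition. Then f(A(lambda)) = F(lambda): for every admissible pair (w,T) in A(lambda) the filling f(w,T) belongs to F(lambda), and conversely every filling in F(lambda) equals f(w,T) for some admissible pair (w,T) in A(lambda). -/

import Mathlib

/-!
The proof rests on one fact about the length function: a reflection `(i,j)`, `(i,-j)` or `(i,-i)`
lowers the length of `w` exactly when it lowers, for `≺`, the entry in position `i` (`len_lt_iff`).
An admissible pair is the same thing as a path in `B_n` along `Γ` that, at each reflection, either
stays put or takes a descending step (`path_of_decChain`, `decChain_of_path`). The columns of the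
filling are the initial segments of the elements of this path at the beginnings of the factors
`Γ'_{ik}` and `Γ_{ij}`.

Images lie in `F(λ)` (`fMap_mem_FSet`). A descending step `(r,-j)` lowers the entries in both
positions `r` and `j`, and a descending step `(j,l)` with `l > λ'_i` lowers the only affected entry
of the column, so rows weakly decrease. A subsequence of `Γ'_j` is a product
`(r_1,-j) ⋯ (r_p,-j)` with `r_1 < ⋯ < r_p < j`, and the remaining reflections of `Γ_{ij}` change
only position `j` of the column; this gives the transition conditions.

Every filling is an image (`exists_of_mem_FSet`). The path is built from its end. The column
`C_{1,1}` has height `n`, so it is a window, and the path is constant from there on. Given a window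
beginning with the right neighbour of a column, a window beginning with that column and lying
earlier on a path is found as follows. A transition `(r_1,-j) ⋯ (r_p,-j)` is inverted on the whole
window; position `r_t` is affected by the `t`-th reflection only, so weakly decreasing rows make
every step a descent (`exists_lift_cycle`). A change of the entry in position `j` from `b` to
`a ≺ b` is realised by a single reflection: since `±b` does not occur elsewhere in the column, `b`
or `-b` stands in position `j` or in a position beyond the column, and the corresponding `(j,-j)`,
`(j,l)` or `(j,-l)` belongs to `Γ_{ij}` (`exists_lift_tail`). The lifts are concatenated by
`realize`.
-/

open scoped BigOperators

namespace HL

/-! ### The order `≺` on nonzero integers in `[-n,n]`: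
`1 ≺ 2 ≺ ... ≺ n ≺ -n ≺ -(n-1) ≺ ... ≺ -1`. -/

def slt (a b : ℤ) : Prop :=
  (0 < a ∧ b < 0) ∨ (0 < a ∧ 0 < b ∧ a < b) ∨ (a < 0 ∧ b < 0 ∧ a < b)

instance slt.dec (a b : ℤ) : Decidable (slt a b) := by unfold slt; infer_instance

def sle (a b : ℤ) : Prop := slt a b ∨ a = b

instance sle.dec (a b : ℤ) : Decidable (sle a b) := by unfold sle; infer_instance

/-! ### Signed permutations (windows), reflections acting on the right -/

/-- The right action of a reflection on a window (or column), with 1-based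
positions.  The reflection `(i, j)` with `j > 0` transposes positions `i` and
`j`; the reflection `(i, -j)` (i.e. `(i,\bar\jmath)`) with `i ≠ j` transposes
positions `i, j` and negates both entries; `(i, -i)` negates position `i`. -/
def applyRefl (l : List ℤ) (t : ℕ × ℤ) : List ℤ :=
  if 0 < t.2 then
    (l.set (t.1 - 1) (l.getD (t.2.toNat - 1) 0)).set (t.2.toNat - 1) (l.getD (t.1 - 1) 0)
  else
    if t.1 = (-t.2).toNat then l.set (t.1 - 1) (-(l.getD (t.1 - 1) 0))
    else (l.set (t.1 - 1) (-(l.getD ((-t.2).toNat - 1) 0))).set ((-t.2).toNat - 1)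
          (-(l.getD (t.1 - 1) 0))

def applyAll (w : List ℤ) (T : List (ℕ × ℤ)) : List ℤ := T.foldl applyRefl w

/-- The word `w[i,j] = w(i) w(i+1) ... w(j)`, 1-based and inclusive. -/
def word (l : List ℤ) (i j : ℕ) : List ℤ := (l.drop (i - 1)).take (j + 1 - i)

/-- `N_{ab}(u)` = number of letters `c` of the word `u` with `a ≺ c ≺ b`. -/
def Nab (a b : ℤ) (u : List ℤ) : ℕ :=
  (u.filter (fun c => decide (slt a c ∧ slt c b))).length

/-- `ℓ₊(w) = #{(k,l) : k < l, w(k) ≻ w(l)}`. -/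
def lplus (l : List ℤ) : ℕ :=
  (((Finset.range l.length) ×ˢ (Finset.range l.length)).filter
    (fun p => p.1 < p.2 ∧ slt (l.getD p.2 0) (l.getD p.1 0))).card

/-- `ℓ₋(w) = #{(k,l) : k ≤ l, w(k) ≻ -w(l)}`. -/
def lminus (l : List ℤ) : ℕ :=
  (((Finset.range l.length) ×ˢ (Finset.range l.length)).filter
    (fun p => p.1 ≤ p.2 ∧ slt (-(l.getD p.2 0)) (l.getD p.1 0))).card

/-- The Coxeter length of a signed permutation given by its window. -/
def len (l : List ℤ) : ℕ := lplus l + lminus l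

/-- The (finite) set of windows of all signed permutations in `B_n`. -/
def allWindows (n : ℕ) : Finset (List ℤ) :=
  Finset.image (fun w : Equiv.Perm (Fin n) × (Fin n → Bool) =>
    (List.finRange n).map (fun i =>
      if w.2 i then -(((w.1 i : ℕ) : ℤ) + 1) else ((w.1 i : ℕ) : ℤ) + 1)) Finset.univ

/-- `w`-admissibility of a sequence of reflections: a strictly decreasing
chain in Bruhat order (recorded via the length function). -/
def decChain : List ℤ → List (ℕ × ℤ) → Bool
  | _, [] => true
  | w, t :: ts => (decide (len (applyRefl w t) < len w)) && decChain (applyRefl w t) ts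

/-- Increasing-admissibility: a strictly increasing chain. -/
def incChain : List ℤ → List (ℕ × ℤ) → Bool
  | _, [] => true
  | w, t :: ts => (decide (len w < len (applyRefl w t))) && incChain (applyRefl w t) ts

/-- The subsequence of a chain `Γ` selected by a set `J` of (0-based) positions. -/
def selChain (Γ : List (ℕ × ℤ)) (J : Finset ℕ) : List (ℕ × ℤ) :=
  (J.sort (· ≤ ·)).map (fun j => Γ.getD j (0, 0))

/-! ### The `λ`-chain of type `C_n` -/

/-- `Γ'_j = ((1,-j),(2,-j),...,(j-1,-j))`. -/
def gammaPrime (j : ℕ) : List (ℕ × ℤ) := (List.range (j - 1)).map (fun r => (r + 1, -(j : ℤ)))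

/-- `Γ_j(k) = ((1,-j),...,(j-1,-j),(j,-(k+1)),...,(j,-n),(j,-j),(j,n),...,(j,k+1))`. -/
def gammaJK (n j k : ℕ) : List (ℕ × ℤ) :=
  gammaPrime j
    ++ (List.range (n - k)).map (fun r => (j, -((k + 1 + r : ℕ) : ℤ)))
    ++ [(j, -(j : ℤ))]
    ++ (List.range (n - k)).map (fun r => (j, ((n - r : ℕ) : ℤ)))

/-- `Γ(k) = Γ'_2 ⋯ Γ'_k Γ_1(k) ⋯ Γ_k(k)` (type `C_n`). -/
def gammaChain (n k : ℕ) : List (ℕ × ℤ) :=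
  ((List.range (k - 1)).map (fun r => gammaPrime (r + 2))).flatten
    ++ ((List.range k).map (fun r => gammaJK n (r + 1) k)).flatten

/-- `λ'_i = #{j : λ_j ≥ i}`, the conjugate partition. -/
def conj (n : ℕ) (lam : Fin n → ℕ) (i : ℕ) : ℕ :=
  (Finset.univ.filter (fun j : Fin n => i ≤ lam j)).card

/-- `λ_1`, the largest part. -/
def lamOne (n : ℕ) (lam : Fin n → ℕ) : ℕ := Finset.univ.sup lam

/-- The fixed `λ`-chain `Γ = Γ^{λ_1} Γ^{λ_1-1} ⋯ Γ^1` with `Γ^i = Γ(λ'_i)`. -/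
def lambdaChain (n : ℕ) (lam : Fin n → ℕ) : List (ℕ × ℤ) :=
  ((List.range (lamOne n lam)).map
    (fun r => gammaChain n (conj n lam (lamOne n lam - r)))).flatten

/-- The set `A(λ)` of admissible pairs `(w, J)`. -/
def ASet (n : ℕ) (lam : Fin n → ℕ) : Set (List ℤ × Finset ℕ) :=
  {p | p.1 ∈ allWindows n ∧ p.2 ⊆ Finset.range (lambdaChain n lam).length ∧
    decChain p.1 (selChain (lambdaChain n lam) p.2) = true}

/-! ### Roots, coroots, affine reflections, and the weight `μ(T)` -/

/-- The root of type `C_n` corresponding to a symbol: `(i,j) ↦ ε_i - ε_j`,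
`(i,-j) ↦ ε_i + ε_j` for `i < j`, and `(i,-i) ↦ 2ε_i`. -/
def rootVec (n : ℕ) (β : ℕ × ℤ) : Fin n → ℤ := fun r =>
  (if ((r : ℕ) + 1 : ℤ) = (β.1 : ℤ) then 1 else 0) +
  (if 0 < β.2 then (if ((r : ℕ) + 1 : ℤ) = β.2 then -1 else 0)
   else (if ((r : ℕ) + 1 : ℤ) = -β.2 then 1 else 0))

/-- The coroot (type `C_n`): `(2ε_i)^∨ = ε_i`, the long rootss are unchanged. -/
def corootVec (n : ℕ) (β : ℕ × ℤ) : Fin n → ℤ :=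
  if β.2 = -(β.1 : ℤ) then (fun r => if ((r : ℕ) + 1 : ℤ) = (β.1 : ℤ) then 1 else 0)
  else rootVec n β

/-- Standard inner product on `ℤ^n`. -/
def ip (n : ℕ) (u v : Fin n → ℤ) : ℤ := ∑ r, u r * v r

/-- The affine reflection in the hyperplane `{v : ⟨v, β^∨⟩ = c}`. -/
def affRefl (n : ℕ) (β : ℕ × ℤ) (c : ℤ) (v : Fin n → ℤ) : Fin n → ℤ :=
  fun r => v r - (ip n v (corootVec n β) - c) * rootVec n β r

/-- `l_k = #{j ≤ k : β_j = β_k}` (here `k` is 0-based). -/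
def lCount (Γ : List (ℕ × ℤ)) (k : ℕ) : ℕ := (Γ.take (k + 1)).count (Γ.getD k (0, 0))

/-- `μ(J) = \hat r_{j_1} ⋯ \hat r_{j_s}(λ)` for `J = {j_1 < ... < j_s}`. -/
def muJ (n : ℕ) (Γ : List (ℕ × ℤ)) (lamVec : Fin n → ℤ) (J : Finset ℕ) : Fin n → ℤ :=
  (J.sort (· ≤ ·)).foldr (fun j v => affRefl n (Γ.getD j (0, 0)) ((lCount Γ j : ℕ) : ℤ) v) lamVec

/-- The linear action of a signed permutation (given by its window) on `ℤ^n`: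
`w(ε_i) = ε_{w(i)}` with `ε_{-i} = -ε_i`. -/
def wAct (n : ℕ) (w : List ℤ) (v : Fin n → ℤ) : Fin n → ℤ := fun r =>
  ∑ i : Fin n, ((if w.getD i 0 = ((r : ℕ) + 1 : ℤ) then v i else 0) +
    (if w.getD i 0 = -(((r : ℕ) + 1 : ℤ)) then -(v i) else 0))

def lamVec (n : ℕ) (lam : Fin n → ℕ) : Fin n → ℤ := fun i => (lam i : ℤ)

/-! ### Fillings of the doubled shape `\hat λ` -/

/-- A filling of the doubled shape, recorded by its primed columns `C'_{i,k}`
(`Cp i k`) and unprimed columns `C_{i,j}` (`Cu i j`). -/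
structure Filling where
  Cp : ℕ → ℕ → List ℤ
  Cu : ℕ → ℕ → List ℤ

def validP (n : ℕ) (lam : Fin n → ℕ) (i k : ℕ) : Prop :=
  1 ≤ i ∧ i ≤ lamOne n lam ∧ 2 ≤ k ∧ k ≤ conj n lam i

def validU (n : ℕ) (lam : Fin n → ℕ) (i j : ℕ) : Prop :=
  1 ≤ i ∧ i ≤ lamOne n lam ∧ 1 ≤ j ∧ j ≤ conj n lam i ∧ (i = 1 → j = 1)

instance validP.dec (n : ℕ) (lam : Fin n → ℕ) (i k : ℕ) : Decidable (validP n lam i k) := by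
  unfold validP; infer_instance

instance validU.dec (n : ℕ) (lam : Fin n → ℕ) (i j : ℕ) : Decidable (validU n lam i j) := by
  unfold validU; infer_instance

/-- The right neighbour `C'_{i,k+1}` of `C'_{i,k}`, with the convention
`C'_{i,λ'_i+1} = C_{i,1}`. -/
def CpNxt (n : ℕ) (lam : Fin n → ℕ) (F : Filling) (i k : ℕ) : List ℤ :=
  if k < conj n lam i then F.Cp i (k + 1) else F.Cu i 1

/-- The right neighbour `C_{i,j+1}` of `C_{i,j}`, with the conventions
`C_{i,λ'_i+1} = C'_{i-1,2}` (if `λ'_{i-1} > 1`) and `C_{i,λ'_i+1} = C_{i-1,1}`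
(if `λ'_{i-1} = 1`). -/
def CuNxt (n : ℕ) (lam : Fin n → ℕ) (F : Filling) (i j : ℕ) : List ℤ :=
  if j < conj n lam i then F.Cu i (j + 1)
  else if 2 ≤ conj n lam (i - 1) then F.Cp (i - 1) 2 else F.Cu (i - 1) 1

/-- No two entries `a, b` of a column with `a = ±b`. -/
def colDistinct (c : List ℤ) : Prop :=
  ∀ p q : ℕ, p < q → q < c.length →
    c.getD p 0 ≠ c.getD q 0 ∧ c.getD p 0 ≠ -(c.getD q 0)

/-- `R = (r_1 < r_2 < ... < r_p)` with `1 ≤ r_t < j ≤ d`. -/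
def sortedR (R : List ℕ) (j d : ℕ) : Prop :=
  List.Chain' (· < ·) R ∧ (∀ r ∈ R, 1 ≤ r ∧ r < j) ∧ 1 ≤ j ∧ j ≤ d

/-- `D (r_1,-j) (r_2,-j) ⋯ (r_p,-j)`. -/
def cycleApply (D : List ℤ) (R : List ℕ) (j : ℕ) : List ℤ :=
  R.foldl (fun E r => applyRefl E (r, -(j : ℤ))) D

/-- The relation between `C_{i,j+1}[1,λ'_i] = E` and `C_{i,j} = D` in a filling:
`E` differs from `D' = D(r_1,-j)⋯(r_p,-j)` only in position `j`,
`E(j) ∉ {±D'(r) : r ≠ j}` and `E(j) ⪯ D'(j)`. -/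
def unprimedTrans (D E : List ℤ) (R : List ℕ) (j d : ℕ) : Prop :=
  (∀ r, 1 ≤ r → r ≤ d → r ≠ j →
    E.getD (r - 1) 0 = (cycleApply D R j).getD (r - 1) 0) ∧
  (∀ r, 1 ≤ r → r ≤ d → r ≠ j →
    E.getD (j - 1) 0 ≠ (cycleApply D R j).getD (r - 1) 0 ∧
    E.getD (j - 1) 0 ≠ -((cycleApply D R j).getD (r - 1) 0)) ∧
  sle (E.getD (j - 1) 0) ((cycleApply D R j).getD (j - 1) 0)

/-- The set `F(λ)` of fillings of the doubled shape `\hat λ`. -/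
def FSet (n : ℕ) (lam : Fin n → ℕ) : Set Filling :=
  {F |
    -- shape
    (∀ i k, (validP n lam i k → (F.Cp i k).length = conj n lam i) ∧
      (¬ validP n lam i k → F.Cp i k = [])) ∧
    (∀ i j, (validU n lam i j → (F.Cu i j).length = conj n lam i) ∧
      (¬ validU n lam i j → F.Cu i j = [])) ∧
    -- entries lie in `{±1, ..., ±n}`
    (∀ i k, validP n lam i k → ∀ a ∈ F.Cp i k, 1 ≤ a.natAbs ∧ a.natAbs ≤ n) ∧
    (∀ i j, validU n lam i j → ∀ a ∈ F.Cu i j, 1 ≤ a.natAbs ∧ a.natAbs ≤ n) ∧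
    -- (1) rows weakly decrease from left to right
    (∀ i k, validP n lam i k → ∀ r, 1 ≤ r → r ≤ conj n lam i →
      sle ((CpNxt n lam F i k).getD (r - 1) 0) ((F.Cp i k).getD (r - 1) 0)) ∧
    (∀ i j, 2 ≤ i → validU n lam i j → ∀ r, 1 ≤ r → r ≤ conj n lam i →
      sle ((CuNxt n lam F i j).getD (r - 1) 0) ((F.Cu i j).getD (r - 1) 0)) ∧
    -- (2) no column contains `a, b` with `a = ±b`
    (∀ i k, validP n lam i k → colDistinct (F.Cp i k)) ∧
    (∀ i j, validU n lam i j → colDistinct (F.Cu i j)) ∧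
    -- (3) primed transitions: `C'_{i,k+1} = C'_{i,k}(r_1,-k)⋯(r_p,-k)`
    (∀ i k, validP n lam i k → ∃ R : List ℕ, sortedR R k (conj n lam i) ∧
      CpNxt n lam F i k = cycleApply (F.Cp i k) R k) ∧
    -- (3) unprimed transitions
    (∀ i j, 2 ≤ i → validU n lam i j → ∃ R : List ℕ, sortedR R j (conj n lam i) ∧
      unprimedTrans (F.Cu i j) ((CuNxt n lam F i j).take (conj n lam i)) R j (conj n lam i))}

/-! ### The filling map `f` -/

/-- Offset in `Γ` of the beginning of block `Γ^i` (the blocks are listed for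
`i = λ_1` down to `1`). -/
def offsetBlock (n : ℕ) (lam : Fin n → ℕ) (i : ℕ) : ℕ :=
  ∑ r ∈ Finset.Ico (i + 1) (lamOne n lam + 1), (gammaChain n (conj n lam r)).length

/-- Offset in `Γ` of the beginning of the factor `Γ'_{i,k}`.-/
def offsetP (n : ℕ) (lam : Fin n → ℕ) (i k : ℕ) : ℕ :=
  offsetBlock n lam i + ∑ j ∈ Finset.Ico 2 k, (gammaPrime j).length

/-- Offset in `Γ` of the beginning of the factor `Γ_{i,j}`.-/
def offsetU (n : ℕ) (lam : Fin n → ℕ) (i j : ℕ) : ℕ :=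
  offsetBlock n lam i + (∑ k ∈ Finset.Ico 2 (conj n lam i + 1), (gammaPrime k).length)
    + ∑ j' ∈ Finset.Ico 1 j, (gammaJK n j' (conj n lam i)).length

/-- `π = w ⋅ (all selected reflections at positions < off)`. -/
def piW (n : ℕ) (lam : Fin n → ℕ) (w : List ℤ) (J : Finset ℕ) (off : ℕ) : List ℤ :=
  applyAll w (selChain (lambdaChain n lam) (J.filter (fun x => x < off)))

/-- The filling map `f`, sending an (admissible) pair `(w, J)` to a filling of
the doubled shape `\hat λ`. -/
def fMap (n : ℕ) (lam : Fin n → ℕ) (w : List ℤ) (J : Finset ℕ) : Filling where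
  Cp := fun i k => if validP n lam i k
    then (piW n lam w J (offsetP n lam i k)).take (conj n lam i) else []
  Cu := fun i j => if validU n lam i j
    then (piW n lam w J (offsetU n lam i j)).take (conj n lam i) else []

/-! ### Content of a filling -/

/-- The columns `\bar{C}^i = C'_{i,2} C_{i,1}` (left to right, `i = λ_1, ..., 1`)
of the compressed filling `\barσ` of shape `2λ`; by the conventions,
`C'_{i,2} = C_{i,1}` when `λ'_i = 1`. -/
def compCols (n : ℕ) (lam : Fin n → ℕ) (F : Filling) : List (List ℤ) :=
  ((List.range (lamOne n lam)).map (fun t =>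
    [(if 2 ≤ conj n lam (lamOne n lam - t) then F.Cp (lamOne n lam - t) 2
      else F.Cu (lamOne n lam - t) 1), F.Cu (lamOne n lam - t) 1])).flatten

/-- The content of a list of columns: the `i`-th coordinate is half the
difference between the numbers of occurrences of `i` and of `-i`. -/
def ctCols (n : ℕ) (cols : List (List ℤ)) : Fin n → ℚ := fun r =>
  ((cols.flatten.count (((r : ℕ) + 1 : ℕ) : ℤ) : ℚ) -
    (cols.flatten.count (-(((r : ℕ) + 1 : ℕ) : ℤ)) : ℚ)) / 2

/-- The content `ct(σ)` of a filling `σ` of `\hatλ`. -/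
def ctQ (n : ℕ) (lam : Fin n → ℕ) (F : Filling) : Fin n → ℚ :=
  ctCols n (compCols n lam F)

/-! ### The statistics `N(D,C)` and `des(D,C)` -/

/-- `σ_{ab} = 1` if `a` and `b` are both negative, else `0`. -/
def sigmaAB (a b : ℤ) : ℕ := if a < 0 ∧ b < 0 then 1 else 0

def allEntries (n : ℕ) : List ℤ :=
  (List.range n).map (fun r => ((r + 1 : ℕ) : ℤ)) ++
    (List.range n).map (fun r => -((r + 1 : ℕ) : ℤ))

/-- Case 1: `N(D, D(r,-j)) = N_{\bar b, a}(D[r+1,j-1]) +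
#{c : \bar b ≺ c ≺ a, c ∉ ±D[1,j]} + σ_{ab}` where `a = D(r)`, `b = D(j)`. -/
def N1 (n : ℕ) (D : List ℤ) (r j : ℕ) : ℕ :=
  Nab (-(D.getD (j - 1) 0)) (D.getD (r - 1) 0) (word D (r + 1) (j - 1)) +
  ((allEntries n).filter (fun c => decide (slt (-(D.getD (j - 1) 0)) c ∧
    slt c (D.getD (r - 1) 0) ∧ c ∉ D.take j ∧ c ∉ (D.take j).map (fun x => -x)))).length +
  sigmaAB (D.getD (r - 1) 0) (D.getD (j - 1) 0)

/-- Case 2: `N(D, D(r_1,-j)⋯(r_p,-j)) = ∑ N(D_{t-1}, D_t)`. -/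
def cycleN (n : ℕ) : List ℤ → List ℕ → ℕ → ℕ
  | _, [], _ => 0
  | D, r :: rs, j => N1 n D r j + cycleN n (applyRefl D (r, -(j : ℤ))) rs j

/-- The possible values `(N(D,C), des(D,C))` arising from the case-by-case
definition of the statistics (cases 0, 2, 3; case 1 is case 2 with `p = 1`).
If `C` is one box taller than `D`, `C` is replaced by `C[1,d]`. -/
def NdesCand (n : ℕ) (D C : List ℤ) : Set (ℕ × ℕ) :=
  {x |
    (C.take D.length = D ∧ x = (0, 0)) ∨
    (∃ j R, sortedR R j D.length ∧ R ≠ [] ∧ C.take D.length = cycleApply D R j ∧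
      x = (cycleN n D R j, R.length)) ∨
    (∃ j R, sortedR R j D.length ∧
      (∀ r, 1 ≤ r → r ≤ D.length → r ≠ j →
        (C.take D.length).getD (r - 1) 0 = (cycleApply D R j).getD (r - 1) 0) ∧
      (∀ r, 1 ≤ r → r ≤ D.length → r ≠ j →
        (C.take D.length).getD (j - 1) 0 ≠ (cycleApply D R j).getD (r - 1) 0 ∧
        (C.take D.length).getD (j - 1) 0 ≠ -((cycleApply D R j).getD (r - 1) 0)) ∧
      slt ((C.take D.length).getD (j - 1) 0) ((cycleApply D R j).getD (j - 1) 0) ∧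
      x = (cycleN n D R j +
        Nab ((C.take D.length).getD (j - 1) 0) ((cycleApply D R j).getD (j - 1) 0)
          (word D (j + 1) D.length), R.length + 1))}

noncomputable def Nstat (n : ℕ) (D C : List ℤ) : ℕ :=
  sInf {v | ∃ d, (v, d) ∈ NdesCand n D C}

noncomputable def desStat (n : ℕ) (D C : List ℤ) : ℕ :=
  sInf {d | ∃ v, (v, d) ∈ NdesCand n D C}

/-- All columns of a filling of `\hatλ`, listed from left to right. -/
def colList (n : ℕ) (lam : Fin n → ℕ) (F : Filling) : List (List ℤ) :=
  ((List.range (lamOne n lam)).map (fun t =>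
    ((List.range (conj n lam (lamOne n lam - t) - 1)).map
      (fun s => F.Cp (lamOne n lam - t) (s + 2))) ++
    (if lamOne n lam - t = 1 then [F.Cu 1 1]
     else (List.range (conj n lam (lamOne n lam - t))).map
      (fun s => F.Cu (lamOne n lam - t) (s + 1))))).flatten

/-- Sum of a binary statistic over adjacent pairs of a list. -/
def adjSumN (f : List ℤ → List ℤ → ℕ) : List (List ℤ) → ℕ
  | a :: b :: rest => f a b + adjSumN f (b :: rest)
  | _ => 0

/-- `N(σ) = ∑_{i=1}^{m-1} N(C_{i+1}, C_i) + ℓ₊(C_1)`. -/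
noncomputable def Nsigma (n : ℕ) (lam : Fin n → ℕ) (F : Filling) : ℕ :=
  adjSumN (Nstat n) (colList n lam F) + lplus ((colList n lam F).getLastD [])

/-- `des(σ) = ∑_{i=1}^{m-1} des(C_{i+1}, C_i)`. -/
noncomputable def desSigma (n : ℕ) (lam : Fin n → ℕ) (F : Filling) : ℕ :=
  adjSumN (desStat n) (colList n lam F)

/-! ### Statistics on fillings of the plain shape `λ` (for Proposition 2.2) -/

/-- The descent statistic of a filling of the Young diagram of `λ`, whose
columns are listed from left to right. -/
def desTau (cols : List (List ℤ)) : ℕ :=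
  adjSumN (fun L R => ((Finset.range L.length).filter
    (fun r => slt (R.getD r 0) (L.getD r 0))).card) cols

/-- The complementary inversion statistic `cinv = n(λ) - inv` of a filling of
the Young diagram of `λ` (columns listed from left to right, `C_k` being the
`k`-th column from the right). -/
def cinvTau (cols : List (List ℤ)) : ℕ :=
  ∑ q ∈ Finset.range cols.length,
    (((Finset.range (cols.getD q []).length) ×ˢ (Finset.range (cols.getD q []).length)).filter
      (fun pp => pp.1 < pp.2 ∧
        (((1 ≤ q ∧ pp.2 < (cols.getD (q - 1) []).length) ∧
            slt ((cols.getD q []).getD pp.2 0) ((cols.getD q []).getD pp.1 0) ∧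
            slt ((cols.getD q []).getD pp.1 0) ((cols.getD (q - 1) []).getD pp.2 0)) ∨
          (¬ (1 ≤ q ∧ pp.2 < (cols.getD (q - 1) []).length) ∧
            slt ((cols.getD q []).getD pp.2 0) ((cols.getD q []).getD pp.1 0))))).card

/-! ### Chains for the root systems `C_n` and `B_n` and the conditions (R1), (R2) -/

def isPosRootC (n : ℕ) (β : ℕ × ℤ) : Prop :=
  (1 ≤ β.1 ∧ (β.1 : ℤ) < β.2 ∧ β.2 ≤ (n : ℤ)) ∨
  (1 ≤ β.1 ∧ 0 < -β.2 ∧ (β.1 : ℤ) ≤ -β.2 ∧ -β.2 ≤ (n : ℤ))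

/-- Positive roots of `B_n` use the same symbols; `(i,-i)` encodes `ε_i`. -/
def isPosRootB (n : ℕ) (β : ℕ × ℤ) : Prop := isPosRootC n β

/-- The root of type `B_n` of a symbol: as in type `C` except `(i,-i) ↦ ε_i`. -/
def rootVecB (n : ℕ) (β : ℕ × ℤ) : Fin n → ℤ :=
  if β.2 = -(β.1 : ℤ) then (fun r => if ((r : ℕ) + 1 : ℤ) = (β.1 : ℤ) then 1 else 0)
  else rootVec n β

/-- The coroot of type `B_n`: `ε_i^∨ = 2ε_i`, long roots unchanged. -/
def corootVecB (n : ℕ) (β : ℕ × ℤ) : Fin n → ℤ :=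
  if β.2 = -(β.1 : ℤ) then (fun r => if ((r : ℕ) + 1 : ℤ) = (β.1 : ℤ) then 2 else 0)
  else rootVec n β

/-- `ω_k` in type `C_n`. -/
def omegaC (n k : ℕ) : Fin n → ℤ := fun r => if (r : ℕ) + 1 ≤ k then 1 else 0

/-- `ω_k` in type `B_n` (`ω_n` is half the sum of the `ε_i`). -/
def omegaB (n k : ℕ) : Fin n → ℚ :=
  if k = n then (fun _ => 1/2) else (fun r => if (r : ℕ) + 1 ≤ k then 1 else 0)

/-- type `B`: `Γ'_j = ((1,-j),...,(j-1,-j),(j))`. -/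
def gammaPrimeB (j : ℕ) : List (ℕ × ℤ) := gammaPrime j ++ [(j, -(j : ℤ))]

/-- type `B`: `Γ(k) = Γ'_1 ⋯ Γ'_k Γ_1(k) ⋯ Γ_k(k)` for `k < n`, and
`Γ(n) = Γ'_1 ⋯ Γ'_n`. -/
def gammaChainB (n k : ℕ) : List (ℕ × ℤ) :=
  ((List.range k).map (fun r => gammaPrimeB (r + 1))).flatten
    ++ (if k = n then [] else ((List.range k).map (fun r => gammaJK n (r + 1) k)).flatten)

/-- `(R2)`: the subsequence of all occurrences of `α, β, γ` is a concatenation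
of consecutive pairs `(γ, α)` or `(γ, β)`. -/
def altPairs (g a b : ℕ × ℤ) : List (ℕ × ℤ) → Prop
  | [] => True
  | [_] => False
  | x :: y :: rest => x = g ∧ (y = a ∨ y = b) ∧ altPairs g a b rest

/-! ### Real vector space versions (for hyperplanes) -/

def ipR (n : ℕ) (u v : Fin n → ℝ) : ℝ := ∑ r, u r * v r

def affReflR (n : ℕ) (β : ℕ × ℤ) (c : ℝ) (v : Fin n → ℝ) : Fin n → ℝ :=
  fun r => v r - (ipR n v (fun s => ((corootVec n β s : ℤ) : ℝ)) - c) *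
    ((rootVec n β r : ℤ) : ℝ)

def wActR (n : ℕ) (w : List ℤ) (v : Fin n → ℝ) : Fin n → ℝ := fun r =>
  ∑ i : Fin n, ((if w.getD i 0 = ((r : ℕ) + 1 : ℤ) then v i else 0) +
    (if w.getD i 0 = -(((r : ℕ) + 1 : ℤ)) then -(v i) else 0))

/-- `γ^∨ = (2/⟨γ,γ⟩) γ`. -/
noncomputable def corootOfR (n : ℕ) (v : Fin n → ℝ) : Fin n → ℝ :=
  fun r => (2 / ipR n v v) * v r

/-- The part of the compressed filling of shape `2λ` consisting of the columns
numbered `2λ_1, 2λ_1 - 1, ..., q` (`\barσ[q]`); column `2i` is `C'_{i,2}` and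
column `2i-1` is `C_{i,1}`. -/
def compColsGe (n : ℕ) (lam : Fin n → ℕ) (F : Filling) (q : ℕ) : List (List ℤ) :=
  ((List.range (lamOne n lam)).map (fun t =>
    (if q ≤ 2 * (lamOne n lam - t) then
      [(if 2 ≤ conj n lam (lamOne n lam - t) then F.Cp (lamOne n lam - t) 2
        else F.Cu (lamOne n lam - t) 1)] else []) ++
    (if q ≤ 2 * (lamOne n lam - t) - 1 then [F.Cu (lamOne n lam - t) 1] else []))).flatten

/-! ### The chains `Δ` and `Φ` of Section 6 -/

/-- `Δ = ((1,p+1),...,(1,n),(1,-1),(1,-n),(1,-(n-1)),...,(1,-(p+1)))`. -/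
def deltaChain (n p : ℕ) : List (ℕ × ℤ) :=
  (List.range (n - p)).map (fun r => (1, ((p + 1 + r : ℕ) : ℤ)))
    ++ [(1, (-1 : ℤ))]
    ++ (List.range (n - p)).map (fun r => (1, -((n - r : ℕ) : ℤ)))

/-- The suffix `Δ_{\bar s}` of `Δ` beginning with `(1,-s)`. -/
def deltaSuffixNeg (p s : ℕ) : List (ℕ × ℤ) :=
  (List.range (s - p)).map (fun r => (1, -((s - r : ℕ) : ℤ)))

/-- The suffix `Δ_{\bar 1}` of `Δ` beginning with `(1,-1)`. -/
def deltaSuffixBar1 (n p : ℕ) : List (ℕ × ℤ) :=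
  [(1, (-1 : ℤ))] ++ (List.range (n - p)).map (fun r => (1, -((n - r : ℕ) : ℤ)))

/-- The suffix `Δ_s` of `Δ` beginning with `(1,s)` (for `p < s ≤ n`). -/
def deltaSuffixPos (n p s : ℕ) : List (ℕ × ℤ) :=
  (List.range (n + 1 - s)).map (fun r => (1, ((s + r : ℕ) : ℤ)))
    ++ [(1, (-1 : ℤ))]
    ++ (List.range (n - p)).map (fun r => (1, -((n - r : ℕ) : ℤ)))

/-- `Φ = ((1,-1),(1,-2),(2,-2),...,(1,-n),...,(n-1,-n),(n,-n))`. -/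
def phiChain (n : ℕ) : List (ℕ × ℤ) :=
  ((List.range n).map (fun jm =>
    (List.range (jm + 1)).map (fun im => (im + 1, -((jm + 1 : ℕ) : ℤ))))).flatten

/-- The suffix `Φ_{ij}` of `Φ` beginning with `(i,-j)`. -/
def phiSuffix (n i j : ℕ) : List (ℕ × ℤ) := (phiChain n).drop ((j - 1) * j / 2 + (i - 1))

/-- `ℓ^{ij}_-(w) = #{(k,l) : k ≤ l, (k,-l)` strictly precedes `(i,-j)` in `Φ`,
`w(k) ≻ -w(l)}`. -/
def lminusBefore (w : List ℤ) (i j : ℕ) : ℕ :=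
  (((Finset.range w.length) ×ˢ (Finset.range w.length)).filter
    (fun p => p.1 ≤ p.2 ∧ (p.2 + 1 < j ∨ (p.2 + 1 = j ∧ p.1 + 1 < i)) ∧
      slt (-(w.getD p.2 0)) (w.getD p.1 0))).card

/-! ### Reflections and windows -/

/-- The windows of `B_n`: words of length `n` in `±1, …, ±n` with pairwise distinct absolute
values. -/
structure IsWin (n : ℕ) (u : List ℤ) : Prop where
  length_eq : u.length = n
  entries : ∀ a ∈ u, 1 ≤ a.natAbs ∧ a.natAbs ≤ n
  distinct : colDistinct u

lemma length_applyRefl (u : List ℤ) (t : ℕ × ℤ) : (applyRefl u t).length = u.length := by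
  unfold applyRefl; split_ifs <;> simp

lemma getD_set (l : List ℤ) (i p : ℕ) (x : ℤ) :
    (l.set i x).getD p 0 = if i = p ∧ p < l.length then x else l.getD p 0 := by
  simp only [List.getD_eq_getElem?_getD, List.getElem?_set]
  grind

lemma getD_applyRefl_neg (u : List ℤ) {r j : ℕ} (hr : 1 ≤ r) (hj : 1 ≤ j) (hrj : r ≠ j)
    (hr' : r ≤ u.length) (hj' : j ≤ u.length) (p : ℕ) :
    (applyRefl u (r, -(j : ℤ))).getD p 0 =
      if p = r - 1 then -(u.getD (j - 1) 0) else if p = j - 1 then -(u.getD (r - 1) 0)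
      else u.getD p 0 := by
  unfold applyRefl
  simp only [neg_neg, Int.toNat_natCast]
  rw [if_neg (by omega), if_neg hrj]
  simp only [getD_set, List.length_set]
  split_ifs <;> first | rfl | omega

lemma getD_applyRefl_pos (u : List ℤ) {r j : ℕ} (hr : 1 ≤ r) (hj : 1 ≤ j) (hrj : r ≠ j)
    (hr' : r ≤ u.length) (hj' : j ≤ u.length) (p : ℕ) :
    (applyRefl u (r, (j : ℤ))).getD p 0 =
      if p = r - 1 then u.getD (j - 1) 0 else if p = j - 1 then u.getD (r - 1) 0
      else u.getD p 0 := by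
  unfold applyRefl
  simp only [Int.toNat_natCast]
  rw [if_pos (by omega)]
  simp only [getD_set, List.length_set]
  split_ifs <;> first | rfl | omega

lemma getD_applyRefl_self (u : List ℤ) {r : ℕ} (hr : 1 ≤ r) (hr' : r ≤ u.length) (p : ℕ) :
    (applyRefl u (r, -(r : ℤ))).getD p 0 =
      if p = r - 1 then -(u.getD (r - 1) 0) else u.getD p 0 := by
  unfold applyRefl
  simp only [neg_neg, Int.toNat_natCast]
  rw [if_neg (by omega), if_pos trivial]
  simp only [getD_set]
  split_ifs <;> first | rfl | omega

/-- The symbols of the positive roots of `C_n`, i.e. the reflections occurring in the chains. -/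
inductive IsRefl (n : ℕ) : ℕ × ℤ → Prop
  | neg (r j : ℕ) (hr : 1 ≤ r) (hrj : r < j) (hj : j ≤ n) : IsRefl n (r, -(j : ℤ))
  | pos (r j : ℕ) (hr : 1 ≤ r) (hrj : r < j) (hj : j ≤ n) : IsRefl n (r, (j : ℤ))
  | self (r : ℕ) (hr : 1 ≤ r) (hj : r ≤ n) : IsRefl n (r, -(r : ℤ))

lemma ext_getD {u v : List ℤ} (h : u.length = v.length)
    (h' : ∀ p < u.length, u.getD p 0 = v.getD p 0) : u = v := by
  apply List.ext_getElem h
  intro p hp hp'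
  have := h' p hp
  simpa [List.getD_eq_getElem?_getD, hp, hp'] using this

lemma applyRefl_applyRefl {n : ℕ} {t : ℕ × ℤ} (ht : IsRefl n t) (u : List ℤ)
    (hu : n ≤ u.length) : applyRefl (applyRefl u t) t = u := by
  apply ext_getD (by simp [length_applyRefl])
  intro p hp
  rcases ht with ⟨r, j, hr, hrj, hj⟩ | ⟨r, j, hr, hrj, hj⟩ | ⟨r, hr, hj⟩
  · rw [getD_applyRefl_neg _ hr (by omega) (by omega) (by rw [length_applyRefl]; omega)
      (by rw [length_applyRefl]; omega)]
    simp only [getD_applyRefl_neg u hr (show 1 ≤ j by omega) (by omega) (by omega)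
      (show j ≤ u.length by omega)]
    split_ifs <;> first | omega | (subst_vars; simp)
  · rw [getD_applyRefl_pos _ hr (by omega) (by omega) (by rw [length_applyRefl]; omega)
      (by rw [length_applyRefl]; omega)]
    simp only [getD_applyRefl_pos u hr (show 1 ≤ j by omega) (by omega) (by omega)
      (show j ≤ u.length by omega)]
    split_ifs <;> first | omega | (subst_vars; simp)
  · rw [getD_applyRefl_self _ hr (by rw [length_applyRefl]; omega)]
    simp only [getD_applyRefl_self u hr (show r ≤ u.length by omega)]
    split_ifs <;> first | omega | (subst_vars; simp)

lemma colDistinct.ne {c : List ℤ} (hc : colDistinct c) {p q : ℕ} (hpq : p ≠ q)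
    (hp : p < c.length) (hq : q < c.length) :
    c.getD p 0 ≠ c.getD q 0 ∧ c.getD p 0 ≠ -(c.getD q 0) := by
  rcases lt_or_gt_of_ne hpq with h | h
  · exact hc p q h hq
  · have := hc q p h hp
    constructor <;> intro h' <;> [exact this.1 h'.symm; exact this.2 (by rw [h', neg_neg])]

lemma entries_iff (n : ℕ) (u : List ℤ) :
    (∀ a ∈ u, 1 ≤ a.natAbs ∧ a.natAbs ≤ n) ↔
      ∀ p < u.length, 1 ≤ (u.getD p 0).natAbs ∧ (u.getD p 0).natAbs ≤ n := by
  constructor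
  · intro h p hp
    apply h
    rw [List.getD_eq_getElem _ _ hp]
    exact List.getElem_mem hp
  · intro h a ha
    obtain ⟨p, hp, rfl⟩ := List.getElem_of_mem ha
    have := h p hp
    rwa [List.getD_eq_getElem _ _ hp] at this

/-- A reflection permutes the entries of a word up to sign. -/
lemma exists_signed_perm {n : ℕ} {t : ℕ × ℤ} (ht : IsRefl n t) (u : List ℤ) (hu : n ≤ u.length) :
    ∃ s : ℕ → ℕ, Function.Injective s ∧ (∀ p < u.length, s p < u.length) ∧
      ∀ p, (applyRefl u t).getD p 0 = u.getD (s p) 0 ∨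
        (applyRefl u t).getD p 0 = -u.getD (s p) 0 := by
  rcases ht with ⟨r, j, hr, hrj, hj⟩ | ⟨r, j, hr, hrj, hj⟩ | ⟨r, hr, hj⟩
  · refine ⟨Equiv.swap (r - 1) (j - 1), Equiv.injective _, ?_, ?_⟩
    · intro p hp; rw [Equiv.swap_apply_def]; split_ifs <;> omega
    · intro p
      rw [getD_applyRefl_neg u hr (by omega) (by omega) (by omega) (by omega),
        Equiv.swap_apply_def]
      split_ifs <;> simp
  · refine ⟨Equiv.swap (r - 1) (j - 1), Equiv.injective _, ?_, ?_⟩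
    · intro p hp; rw [Equiv.swap_apply_def]; split_ifs <;> omega
    · intro p
      rw [getD_applyRefl_pos u hr (by omega) (by omega) (by omega) (by omega),
        Equiv.swap_apply_def]
      split_ifs <;> simp
  · refine ⟨id, Function.injective_id, fun p hp => hp, ?_⟩
    intro p
    rw [getD_applyRefl_self u hr (by omega)]
    split_ifs with h <;> simp [h]

lemma colDistinct_applyRefl {n : ℕ} {t : ℕ × ℤ} (ht : IsRefl n t) {u : List ℤ}
    (hu : n ≤ u.length) (h : colDistinct u) : colDistinct (applyRefl u t) := by
  obtain ⟨s, hs, hlt, hval⟩ := exists_signed_perm ht u hu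
  intro p q hpq hq
  rw [length_applyRefl] at hq
  have := h.ne (fun e => hpq.ne (hs e)) (hlt p (by omega)) (hlt q hq)
  rcases hval p with h1 | h1 <;> rcases hval q with h2 | h2 <;> rw [h1, h2] <;>
    constructor <;> intro h3 <;> omega

lemma entries_applyRefl {n m : ℕ} {t : ℕ × ℤ} (ht : IsRefl n t) {u : List ℤ}
    (hu : n ≤ u.length) (h : ∀ a ∈ u, 1 ≤ a.natAbs ∧ a.natAbs ≤ m) :
    ∀ a ∈ applyRefl u t, 1 ≤ a.natAbs ∧ a.natAbs ≤ m := by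
  rw [entries_iff] at h ⊢
  obtain ⟨s, hs, hlt, hval⟩ := exists_signed_perm ht u hu
  intro p hp
  rw [length_applyRefl] at hp
  have := h _ (hlt p hp)
  rcases hval p with h1 | h1 <;> rw [h1] <;> simpa using this

lemma IsWin.applyRefl {n : ℕ} {u : List ℤ} (hu : IsWin n u) {t : ℕ × ℤ} (ht : IsRefl n t) :
    IsWin n (applyRefl u t) :=
  ⟨by rw [length_applyRefl, hu.length_eq], entries_applyRefl ht hu.length_eq.ge hu.entries,
    colDistinct_applyRefl ht hu.length_eq.ge hu.distinct⟩

lemma IsWin.entry {n : ℕ} {u : List ℤ} (hu : IsWin n u) {p : ℕ} (hp : p < n) :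
    1 ≤ (u.getD p 0).natAbs ∧ (u.getD p 0).natAbs ≤ n :=
  (entries_iff n u).1 hu.entries p (by rw [hu.length_eq]; exact hp)

/-- Every letter occurs, up to sign, in a window. -/
lemma IsWin.exists_entry {n : ℕ} {u : List ℤ} (hu : IsWin n u) {b : ℤ} (hb : 1 ≤ b.natAbs)
    (hb' : b.natAbs ≤ n) : ∃ p < n, u.getD p 0 = b ∨ u.getD p 0 = -b := by
  have hinj : Set.InjOn (fun p => (u.getD p 0).natAbs) (Finset.range n : Set ℕ) := by
    intro p hp q hq h
    by_contra hne
    have := hu.distinct.ne hne (by simpa [hu.length_eq] using hp) (by simpa [hu.length_eq] using hq)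
    simp only at h
    omega
  have hmaps : ∀ p ∈ Finset.range n, (u.getD p 0).natAbs ∈ Finset.Icc 1 n := by
    intro p hp
    simpa using hu.entry (Finset.mem_range.1 hp)
  have := Finset.surjOn_of_injOn_of_card_le _ hmaps hinj (by simp)
  obtain ⟨p, hp, h⟩ := this (show b.natAbs ∈ (Finset.Icc 1 n : Set ℕ) by simp; omega)
  exact ⟨p, by simpa using hp, by simp only at h; omega⟩

lemma isWin_of_mem {n : ℕ} {u : List ℤ} (h : u ∈ allWindows n) : IsWin n u := by
  simp only [allWindows, Finset.mem_image, Finset.mem_univ, true_and] at h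
  obtain ⟨⟨σ, s⟩, rfl⟩ := h
  refine ⟨by simp, ?_, ?_⟩
  · intro a ha
    simp only [List.mem_map, List.mem_finRange, true_and] at ha
    obtain ⟨i, rfl⟩ := ha
    have := (σ i).isLt
    split_ifs <;> omega
  · intro p q hpq hq
    simp only [List.length_map, List.length_finRange] at hq
    rw [List.getD_eq_getElem _ _ (by simp; omega), List.getD_eq_getElem _ _ (by simpa using hq)]
    simp only [List.getElem_map, List.getElem_finRange]
    have hne : ((σ ⟨p, by omega⟩ : Fin n) : ℕ) ≠ (σ ⟨q, hq⟩ : Fin n) := by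
      intro h
      have := σ.injective (Fin.ext h)
      simp at this
      omega
    simp only [Fin.cast_mk]
    split_ifs <;> constructor <;> omega

lemma mem_of_isWin {n : ℕ} {u : List ℤ} (hu : IsWin n u) : u ∈ allWindows n := by
  simp only [allWindows, Finset.mem_image, Finset.mem_univ, true_and]
  let f : Fin n → Fin n := fun i =>
    ⟨(u.getD i 0).natAbs - 1, by have := hu.entry i.isLt; omega⟩
  have hf : Function.Injective f := by
    intro i j h
    by_contra hne
    have h1 := hu.distinct.ne (fun e => hne (Fin.ext e)) (by simp [hu.length_eq])
      (by simp [hu.length_eq])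
    have h2 := hu.entry i.isLt
    have h3 := hu.entry j.isLt
    simp only [f, Fin.mk.injEq] at h
    omega
  refine ⟨(Equiv.ofBijective f hf.bijective_of_finite, fun i => decide (u.getD i 0 < 0)), ?_⟩
  apply ext_getD (by simp [hu.length_eq])
  intro p hp
  have hp' : p < n := by simpa using hp
  rw [List.getD_eq_getElem _ _ hp]
  have := hu.entry hp'
  simp only [List.getElem_map, List.getElem_finRange, Fin.cast_mk, Equiv.ofBijective_apply, f,
    decide_eq_true_eq]
  split_ifs <;> omega

/-! ### The length function -/

/-- The order-reversing odd relabelling of `±1, …, ±n`, turning `≺` into `>`. -/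
def key (n : ℕ) (a : ℤ) : ℤ := if 0 < a then n + 1 - a else -(n + 1) - a

/-- The contribution of the ordered pair `(k, l)` of positions to the length. -/
def pairCount (v : ℕ → ℤ) (k l : ℕ) : ℕ :=
  (if k < l ∧ v k < v l then 1 else 0) + (if k ≤ l ∧ v k + v l < 0 then 1 else 0)

lemma len_eq_sum {n : ℕ} {u : List ℤ} (hu : IsWin n u) :
    len u = ∑ k ∈ Finset.range n, ∑ l ∈ Finset.range n,
      pairCount (fun p => key n (u.getD p 0)) k l := by
  unfold len lplus lminus
  rw [hu.length_eq, Finset.card_filter, Finset.card_filter, ← Finset.sum_add_distrib,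
    Finset.sum_product]
  refine Finset.sum_congr rfl fun k hk => Finset.sum_congr rfl fun l hl => ?_
  have h1 := hu.entry (Finset.mem_range.1 hk)
  have h2 := hu.entry (Finset.mem_range.1 hl)
  unfold pairCount
  congr 1
  · congr 1
    simp only [slt, key, eq_iff_iff]
    split_ifs <;> omega
  · congr 1
    simp only [slt, key, eq_iff_iff]
    split_ifs <;> omega

lemma sum_sum_split {n i j : ℕ} (hi : i < n) (hj : j < n) (hij : i ≠ j) (c : ℕ → ℕ → ℕ) :
    ∑ k ∈ Finset.range n, ∑ l ∈ Finset.range n, c k l =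
      (c i i + c i j + c j i + c j j) +
      ∑ k ∈ ((Finset.range n).erase i).erase j, (c i k + c j k + c k i + c k j) +
      ∑ k ∈ ((Finset.range n).erase i).erase j, ∑ l ∈ ((Finset.range n).erase i).erase j, c k l := by
  have key : ∀ f : ℕ → ℕ, ∑ k ∈ Finset.range n, f k =
      f i + f j + ∑ k ∈ ((Finset.range n).erase i).erase j, f k := by
    intro f
    rw [← Finset.add_sum_erase _ f (Finset.mem_range.2 hi),
      ← Finset.add_sum_erase _ f (Finset.mem_erase.2 ⟨hij.symm, Finset.mem_range.2 hj⟩), add_assoc]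
  simp only [key, Finset.sum_add_distrib]
  ring

/-- To compare lengths after changing the entries in positions `i` and `j` it suffices to compare
the contributions of these two positions, and their joint contribution with each other one. -/
lemma sum_lt_of_local {n i j : ℕ} (hi : i < n) (hj : j < n) (hij : i < j) (v v' : ℕ → ℤ)
    (heq : ∀ k, k ≠ i → k ≠ j → v' k = v k)
    (h0 : pairCount v' i i + pairCount v' i j + pairCount v' j j <
      pairCount v i i + pairCount v i j + pairCount v j j)
    (h1 : ∀ k, k ≠ i → k ≠ j →
      pairCount v' i k + pairCount v' j k + pairCount v' k i + pairCount v' k j ≤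
      pairCount v i k + pairCount v j k + pairCount v k i + pairCount v k j) :
    ∑ k ∈ Finset.range n, ∑ l ∈ Finset.range n, pairCount v' k l <
      ∑ k ∈ Finset.range n, ∑ l ∈ Finset.range n, pairCount v k l := by
  rw [sum_sum_split hi hj hij.ne, sum_sum_split hi hj hij.ne]
  have hji : ∀ v, pairCount v j i = 0 := by
    intro v; unfold pairCount; rw [if_neg (by omega), if_neg (by omega)]
  rw [hji, hji]
  refine add_lt_add_of_lt_of_le (add_lt_add_of_lt_of_le (by omega) ?_) ?_
  · refine Finset.sum_le_sum fun k hk => ?_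
    simp only [Finset.mem_erase] at hk
    exact h1 k hk.2.1 hk.1
  · refine Finset.sum_le_sum fun k hk => Finset.sum_le_sum fun l hl => le_of_eq ?_
    simp only [Finset.mem_erase] at hk hl
    unfold pairCount
    rw [heq k hk.2.1 hk.1, heq l hl.2.1 hl.1]

/-- The contribution to the length of two positions carrying keys `x` and `y`, in this order. -/
def orderedCount (x y : ℤ) : ℕ := (if x < y then 1 else 0) + (if x + y < 0 then 1 else 0)

lemma pairCount_add_of_lt (v : ℕ → ℤ) {k l : ℕ} (h : k < l) :
    pairCount v k l = orderedCount (v k) (v l) ∧ pairCount v l k = 0 := by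
  simp [pairCount, orderedCount, h, h.le, h.not_gt, h.not_ge]

lemma pairCount_self (v : ℕ → ℤ) (k : ℕ) : pairCount v k k = if v k < 0 then 1 else 0 := by
  unfold pairCount
  split_ifs <;> omega

lemma ite_le_ite {p q : Prop} [Decidable p] [Decidable q] (h : p → q) :
    (if p then 1 else 0 : ℕ) ≤ if q then 1 else 0 := by
  split_ifs <;> simp_all

lemma sum_lt_pos {n i j : ℕ} (hj : j < n) (hij : i < j) (v v' : ℕ → ℤ)
    (hi' : v' i = v j) (hj' : v' j = v i) (heq : ∀ k, k ≠ i → k ≠ j → v' k = v k)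
    (h : v i < v j) :
    ∑ k ∈ Finset.range n, ∑ l ∈ Finset.range n, pairCount v' k l <
      ∑ k ∈ Finset.range n, ∑ l ∈ Finset.range n, pairCount v k l := by
  apply sum_lt_of_local (hij.trans hj) hj hij v v' heq
  · simp only [pairCount_add_of_lt _ hij, pairCount_self, hi', hj', orderedCount]
    rw [if_neg (show ¬ v j < v i by omega), if_pos h, add_comm (v j) (v i)]
    omega
  · intro k hki hkj
    rcases lt_or_gt_of_ne hki with h1 | h1
    · simp only [pairCount_add_of_lt _ h1, pairCount_add_of_lt _ (h1.trans hij), hi', hj',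
        heq k hki hkj]
      omega
    · rcases lt_or_gt_of_ne hkj with h2 | h2
      · simp only [pairCount_add_of_lt _ h1, pairCount_add_of_lt _ h2, hi', hj',
          heq k hki hkj, orderedCount]
        have e1 := ite_le_ite (p := v j < v k) (q := v i < v k) (by omega)
        have e2 := ite_le_ite (p := v j + v k < 0) (q := v k + v j < 0) (by omega)
        have e3 := ite_le_ite (p := v k < v i) (q := v k < v j) (by omega)
        have e4 := ite_le_ite (p := v k + v i < 0) (q := v i + v k < 0) (by omega)
        linarith
      · simp only [pairCount_add_of_lt _ h1, pairCount_add_of_lt _ h2, hi', hj',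
          heq k hki hkj]
        omega

lemma sum_lt_neg {n i j : ℕ} (hj : j < n) (hij : i < j) (v v' : ℕ → ℤ)
    (hi' : v' i = -v j) (hj' : v' j = -v i) (heq : ∀ k, k ≠ i → k ≠ j → v' k = v k)
    (h : v i + v j < 0) :
    ∑ k ∈ Finset.range n, ∑ l ∈ Finset.range n, pairCount v' k l <
      ∑ k ∈ Finset.range n, ∑ l ∈ Finset.range n, pairCount v k l := by
  apply sum_lt_of_local (hij.trans hj) hj hij v v' heq
  · simp only [pairCount_add_of_lt _ hij, pairCount_self, hi', hj', orderedCount]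
    rw [if_neg (show ¬ -v j + -v i < 0 by omega), if_pos h]
    have e1 := ite_le_ite (p := -v j < 0) (q := v i < 0) (by omega)
    have e2 := ite_le_ite (p := -v i < 0) (q := v j < 0) (by omega)
    have e3 := ite_le_ite (p := -v j < -v i) (q := v i < v j) (by omega)
    linarith
  · intro k hki hkj
    rcases lt_or_gt_of_ne hki with h1 | h1
    · simp only [pairCount_add_of_lt _ h1, pairCount_add_of_lt _ (h1.trans hij), hi', hj',
        heq k hki hkj, orderedCount]
      have e1 := ite_le_ite (p := v k < -v j) (q := v k + v j < 0) (by omega)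
      have e2 := ite_le_ite (p := v k + -v j < 0) (q := v k < v j) (by omega)
      have e3 := ite_le_ite (p := v k < -v i) (q := v k + v i < 0) (by omega)
      have e4 := ite_le_ite (p := v k + -v i < 0) (q := v k < v i) (by omega)
      linarith
    · rcases lt_or_gt_of_ne hkj with h2 | h2
      · simp only [pairCount_add_of_lt _ h1, pairCount_add_of_lt _ h2, hi', hj',
          heq k hki hkj, orderedCount]
        have e1 := ite_le_ite (p := -v j < v k) (q := v i < v k) (by omega)
        have e2 := ite_le_ite (p := -v j + v k < 0) (q := v k < v j) (by omega)
        have e3 := ite_le_ite (p := v k < -v i) (q := v i + v k < 0) (by omega)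
        have e4 := ite_le_ite (p := v k + -v i < 0) (q := v k + v j < 0) (by omega)
        linarith
      · simp only [pairCount_add_of_lt _ h1, pairCount_add_of_lt _ h2, hi', hj',
          heq k hki hkj, orderedCount]
        have e1 := ite_le_ite (p := -v j < v k) (q := v i < v k) (by omega)
        have e2 := ite_le_ite (p := -v j + v k < 0) (q := v i + v k < 0) (by omega)
        have e3 := ite_le_ite (p := -v i < v k) (q := v j < v k) (by omega)
        have e4 := ite_le_ite (p := -v i + v k < 0) (q := v j + v k < 0) (by omega)
        linarith

lemma sum_lt_self {n i : ℕ} (hi : i < n) (v v' : ℕ → ℤ)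
    (hi' : v' i = -v i) (heq : ∀ k, k ≠ i → v' k = v k) (h : v i < 0) :
    ∑ k ∈ Finset.range n, ∑ l ∈ Finset.range n, pairCount v' k l <
      ∑ k ∈ Finset.range n, ∑ l ∈ Finset.range n, pairCount v k l := by
  have split : ∀ c : ℕ → ℕ → ℕ, ∑ k ∈ Finset.range n, ∑ l ∈ Finset.range n, c k l =
      c i i + ∑ k ∈ (Finset.range n).erase i, (c i k + c k i) +
      ∑ k ∈ (Finset.range n).erase i, ∑ l ∈ (Finset.range n).erase i, c k l := by
    intro c
    simp only [← Finset.add_sum_erase (Finset.range n) _ (Finset.mem_range.2 hi),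
      Finset.sum_add_distrib]
    ring
  rw [split, split]
  refine add_lt_add_of_lt_of_le (add_lt_add_of_lt_of_le ?_ ?_) ?_
  · simp only [pairCount, hi']
    split_ifs <;> omega
  · refine Finset.sum_le_sum fun k hk => ?_
    have hk := (Finset.mem_erase.1 hk).1
    simp only [pairCount, hi', heq k hk]
    split_ifs <;> omega
  · refine Finset.sum_le_sum fun k hk => Finset.sum_le_sum fun l hl => le_of_eq ?_
    simp only [Finset.mem_erase] at hk hl
    unfold pairCount
    rw [heq k hk.1, heq l hl.1]

/-- A reflection that lowers its first affected entry lowers the length. -/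
lemma len_lt_of_slt {n : ℕ} {u : List ℤ} (hu : IsWin n u) {t : ℕ × ℤ} (ht : IsRefl n t)
    (h : slt ((applyRefl u t).getD (t.1 - 1) 0) (u.getD (t.1 - 1) 0)) :
    len (applyRefl u t) < len u := by
  rw [len_eq_sum hu, len_eq_sum (hu.applyRefl ht)]
  have hlen := hu.length_eq
  rcases ht with ⟨r, j, hr, hrj, hj⟩ | ⟨r, j, hr, hrj, hj⟩ | ⟨r, hr, hj⟩
  · have hg := getD_applyRefl_neg u hr (show 1 ≤ j by omega) (by omega) (by omega)
      (show j ≤ u.length by omega)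
    have h1 := hu.entry (show r - 1 < n by omega)
    have h2 := hu.entry (show j - 1 < n by omega)
    apply sum_lt_neg (show j - 1 < n by omega) (show r - 1 < j - 1 by omega)
    · simp only [hg, if_pos, key]; split_ifs <;> omega
    · simp only [hg, if_pos, key]; split_ifs <;> omega
    · intro k h1 h2; simp only [hg, if_neg h1, if_neg h2]
    · simp only [hg, if_pos, slt] at h
      simp only [key]; split_ifs <;> omega
  · have hg := getD_applyRefl_pos u hr (show 1 ≤ j by omega) (by omega) (by omega)
      (show j ≤ u.length by omega)
    have h1 := hu.entry (show r - 1 < n by omega)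
    have h2 := hu.entry (show j - 1 < n by omega)
    apply sum_lt_pos (show j - 1 < n by omega) (show r - 1 < j - 1 by omega)
    · simp only [hg, if_pos]
    · simp only [hg, if_neg (show j - 1 ≠ r - 1 by omega), if_pos]
    · intro k h1 h2; simp only [hg, if_neg h1, if_neg h2]
    · simp only [hg, if_pos, slt] at h
      simp only [key]; split_ifs <;> omega
  · have hg := getD_applyRefl_self u hr (show r ≤ u.length by omega)
    have h1 := hu.entry (show r - 1 < n by omega)
    apply sum_lt_self (show r - 1 < n by omega)
    · simp only [hg, if_pos, key]; split_ifs <;> omega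
    · intro k h1; simp only [hg, if_neg h1]
    · simp only [hg, if_pos, slt] at h
      simp only [key]; split_ifs <;> omega

lemma slt_or_slt {a b : ℤ} (ha : a ≠ 0) (hb : b ≠ 0) (h : a ≠ b) : slt a b ∨ slt b a := by
  unfold slt; omega

/-- A reflection changes its first affected entry. -/
lemma applyRefl_ne {n : ℕ} {u : List ℤ} (hu : IsWin n u) {t : ℕ × ℤ} (ht : IsRefl n t) :
    (applyRefl u t).getD (t.1 - 1) 0 ≠ u.getD (t.1 - 1) 0 := by
  have hlen := hu.length_eq
  rcases ht with ⟨r, j, hr, hrj, hj⟩ | ⟨r, j, hr, hrj, hj⟩ | ⟨r, hr, hj⟩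
  · rw [getD_applyRefl_neg u hr (show 1 ≤ j by omega) (by omega) (by omega) (by omega), if_pos rfl]
    have := hu.distinct.ne (show r - 1 ≠ j - 1 by omega) (by omega) (by omega)
    simp only; omega
  · rw [getD_applyRefl_pos u hr (show 1 ≤ j by omega) (by omega) (by omega) (by omega), if_pos rfl]
    have := hu.distinct.ne (show r - 1 ≠ j - 1 by omega) (by omega) (by omega)
    simp only; omega
  · rw [getD_applyRefl_self u hr (by omega), if_pos rfl]
    have := hu.entry (show r - 1 < n by omega)
    simp only; omega

lemma IsRefl.bounds {n : ℕ} {t : ℕ × ℤ} (ht : IsRefl n t) : 1 ≤ t.1 ∧ t.1 ≤ n := by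
  rcases ht with ⟨r, j, hr, hrj, hj⟩ | ⟨r, j, hr, hrj, hj⟩ | ⟨r, hr, hj⟩ <;> simp only <;> omega

/-- A reflection lowers the length exactly when it lowers its first affected entry. -/
lemma len_lt_iff {n : ℕ} {u : List ℤ} (hu : IsWin n u) {t : ℕ × ℤ} (ht : IsRefl n t) :
    len (applyRefl u t) < len u ↔ slt ((applyRefl u t).getD (t.1 - 1) 0) (u.getD (t.1 - 1) 0) := by
  refine ⟨fun h => ?_, len_lt_of_slt hu ht⟩
  by_contra hcon
  have hb := ht.bounds
  have h1 := hu.entry (show t.1 - 1 < n by omega)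
  have h2 := (hu.applyRefl ht).entry (show t.1 - 1 < n by omega)
  have h3 := (slt_or_slt (by omega) (by omega) (applyRefl_ne hu ht)).resolve_left hcon
  have h4 := len_lt_of_slt (hu.applyRefl ht) ht
  rw [applyRefl_applyRefl ht u hu.length_eq.ge] at h4
  exact absurd (h4 h3) (by omega)

/-! ### Descending paths along a chain of reflections -/

/-- `v` is obtained from `u` by a `u`-admissible subsequence of `L`. -/
def Reach (L : List (ℕ × ℤ)) (u v : List ℤ) : Prop :=
  ∃ T, List.Sublist T L ∧ decChain u T = true ∧ applyAll u T = v

/-- `P m` is the element reached before the `m`-th reflection of `Γ` is processed: each reflection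
is either skipped, or applied with a drop in length. -/
def IsPath (Γ : List (ℕ × ℤ)) (P : ℕ → List ℤ) : Prop :=
  ∀ m < Γ.length, P (m + 1) = P m ∨
    (P (m + 1) = applyRefl (P m) (Γ.getD m (0, 0)) ∧ len (P (m + 1)) < len (P m))

lemma applyAll_append (u : List ℤ) (T T' : List (ℕ × ℤ)) :
    applyAll u (T ++ T') = applyAll (applyAll u T) T' := by
  simp [applyAll]

lemma decChain_append (u : List ℤ) (T T' : List (ℕ × ℤ)) :
    decChain u (T ++ T') = (decChain u T && decChain (applyAll u T) T') := by
  induction T generalizing u with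
  | nil => simp [decChain, applyAll]
  | cons t T ih => simp [decChain, ih, applyAll, Bool.and_assoc]

lemma Reach.refl (L : List (ℕ × ℤ)) (u : List ℤ) : Reach L u u :=
  ⟨[], List.nil_sublist _, rfl, rfl⟩

lemma Reach.append {L M : List (ℕ × ℤ)} {u v w : List ℤ} (h : Reach L u v) (h' : Reach M v w) :
    Reach (L ++ M) u w := by
  obtain ⟨T, hT, hd, rfl⟩ := h
  obtain ⟨T', hT', hd', rfl⟩ := h'
  exact ⟨T ++ T', hT.append hT', by rw [decChain_append, hd, hd']; rfl, applyAll_append _ _ _⟩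

lemma Reach.of_append {L M : List (ℕ × ℤ)} {u w : List ℤ} (h : Reach (L ++ M) u w) :
    ∃ v, Reach L u v ∧ Reach M v w := by
  obtain ⟨T, hT, hd, rfl⟩ := h
  obtain ⟨T₁, T₂, rfl, h1, h2⟩ := List.sublist_append_iff.1 hT
  rw [decChain_append, Bool.and_eq_true] at hd
  exact ⟨applyAll u T₁, ⟨T₁, h1, hd.1, rfl⟩, ⟨T₂, h2, hd.2, (applyAll_append _ _ _).symm⟩⟩

lemma Reach.single {L : List (ℕ × ℤ)} {t : ℕ × ℤ} (ht : t ∈ L) {u : List ℤ}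
    (h : len (applyRefl u t) < len u) : Reach L u (applyRefl u t) :=
  ⟨[t], List.singleton_sublist.2 ht, by simp [decChain, h], rfl⟩

/-- A property preserved by each descending step in `L` is preserved by `Reach L`. -/
lemma Reach.induct {L : List (ℕ × ℤ)} {u v : List ℤ} (h : Reach L u v)
    (p : List ℤ → Prop) (hp : p u)
    (step : ∀ x, ∀ t ∈ L, p x → len (applyRefl x t) < len x → p (applyRefl x t)) : p v := by
  obtain ⟨T, hT, hd, rfl⟩ := h
  have hmem : ∀ t ∈ T, t ∈ L := fun t ht => hT.subset ht
  clear hT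
  induction T generalizing u with
  | nil => exact hp
  | cons t T ih =>
    simp only [decChain, Bool.and_eq_true, decide_eq_true_eq] at hd
    exact ih (step u t (hmem t (by simp)) hp hd.1) hd.2 (fun s hs => hmem s (by simp [hs]))

lemma reach_of_path (L pre post : List (ℕ × ℤ)) (P : ℕ → List ℤ)
    (h : IsPath (pre ++ L ++ post) P) :
    Reach L (P pre.length) (P (pre.length + L.length)) := by
  induction L generalizing pre with
  | nil => exact Reach.refl _ _
  | cons t L ih =>
    have h1 := ih (pre ++ [t]) (by simpa using h)
    have h2 := h pre.length (by simp)
    have h3 : (pre ++ t :: L ++ post).getD pre.length (0, 0) = t := by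
      simp [List.getD_eq_getElem?_getD]
    rw [h3] at h2
    rw [List.length_append, List.length_singleton] at h1
    have h4 : pre.length + (t :: L).length = pre.length + 1 + L.length := by simp; omega
    rw [h4]
    refine Reach.append (L := [t]) ?_ h1
    rcases h2 with h2 | ⟨h2, h5⟩
    · rw [h2]; exact Reach.refl _ _
    · rw [h2] at h5 ⊢; exact Reach.single (by simp) h5

lemma path_append {L M : List (ℕ × ℤ)} {p q : ℕ → List ℤ} (hp : IsPath L p) (hq : IsPath M q)
    (h : p L.length = q 0) :
    ∃ P, IsPath (L ++ M) P ∧ (∀ m ≤ L.length, P m = p m) ∧ ∀ m, P (L.length + m) = q m := by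
  have h1 : ∀ m ≤ L.length, (if m < L.length then p m else q (m - L.length)) = p m := by
    intro m hm
    split_ifs with h'
    · rfl
    · rw [show m = L.length by omega, Nat.sub_self, h]
  refine ⟨fun m => if m < L.length then p m else q (m - L.length), ?_, h1, fun m => by simp⟩
  intro m hm
  by_cases hmL : m < L.length
  · simp only [h1 m hmL.le, h1 (m + 1) hmL]
    have := hp m hmL
    rwa [List.getD_append _ _ _ _ hmL]
  · simp only [if_neg hmL, if_neg (show ¬ m + 1 < L.length by omega)]
    rw [List.getD_append_right _ _ _ _ (by omega), show m + 1 - L.length = m - L.length + 1 by omega]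
    exact hq _ (by rw [List.length_append] at hm; omega)

lemma path_of_reach {L : List (ℕ × ℤ)} {u v : List ℤ} (h : Reach L u v) :
    ∃ P, IsPath L P ∧ P 0 = u ∧ P L.length = v := by
  induction L generalizing u with
  | nil =>
    obtain ⟨T, hT, hd, rfl⟩ := h
    rw [List.sublist_nil.1 hT]
    exact ⟨fun _ => u, fun m hm => absurd hm (by simp), rfl, rfl⟩
  | cons t L ih =>
    obtain ⟨w, ⟨T, hT, hd, rfl⟩, h2⟩ := Reach.of_append (L := [t]) (M := L) h
    obtain ⟨q, hq, hq0, hql⟩ := ih h2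
    have hp : IsPath [t] (fun m => if m = 0 then u else applyAll u T) := by
      intro m hm
      have : m = 0 := by simpa using hm
      subst this
      rcases T with _ | ⟨s, T⟩
      · left; rfl
      · right
        obtain ⟨rfl⟩ : s = t := by simpa using hT.subset (show s ∈ s :: T by simp)
        have : T = [] := by simpa using hT.length_le
        subst this
        simpa [decChain, applyAll] using hd
    obtain ⟨P, hP, h3, h4⟩ := path_append hp hq (by simp [hq0])
    refine ⟨P, hP, by simp [h3 0], ?_⟩
    rw [← hql, ← h4]
    simp [add_comm]

lemma sort_filter_succ (J : Finset ℕ) (m : ℕ) :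
    (J.filter (fun x => x < m + 1)).sort (· ≤ ·) =
      (J.filter (fun x => x < m)).sort (· ≤ ·) ++ (if m ∈ J then [m] else []) := by
  have hsorted := fun s : Finset ℕ => Finset.pairwise_sort s (· ≤ ·)
  split_ifs with hm
  · apply List.Perm.eq_of_pairwise' (r := (· ≤ ·)) (hsorted _)
    · rw [List.pairwise_append]
      refine ⟨hsorted _, by simp, ?_⟩
      intro a ha b hb
      simp only [Finset.mem_sort, Finset.mem_filter] at ha
      simp only [List.mem_singleton] at hb
      omega
    · rw [List.perm_ext_iff_of_nodup (Finset.sort_nodup _ _)]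
      · intro a
        simp only [Finset.mem_sort, Finset.mem_filter, List.mem_append, List.mem_singleton]
        constructor
        · rintro ⟨h1, h2⟩
          by_cases h : a = m
          · exact Or.inr h
          · exact Or.inl ⟨h1, by omega⟩
        · rintro (⟨h1, h2⟩ | rfl)
          · exact ⟨h1, by omega⟩
          · exact ⟨hm, by omega⟩
      · rw [List.nodup_append]
        refine ⟨Finset.sort_nodup _ _, by simp, ?_⟩
        intro a ha b hb
        simp only [Finset.mem_sort, Finset.mem_filter] at ha
        simp only [List.mem_singleton] at hb
        omega
  · rw [List.append_nil]
    congr 1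
    ext a
    simp only [Finset.mem_filter]
    constructor
    · rintro ⟨h1, h2⟩
      refine ⟨h1, ?_⟩
      rcases eq_or_ne a m with rfl | h
      · exact absurd h1 hm
      · omega
    · rintro ⟨h1, h2⟩
      exact ⟨h1, by omega⟩

lemma selChain_filter_succ (Γ : List (ℕ × ℤ)) (J : Finset ℕ) (m : ℕ) :
    selChain Γ (J.filter (fun x => x < m + 1)) =
      selChain Γ (J.filter (fun x => x < m)) ++ (if m ∈ J then [Γ.getD m (0, 0)] else []) := by
  unfold selChain
  rw [sort_filter_succ, List.map_append]
  split_ifs <;> rfl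

lemma selChain_filter_zero (Γ : List (ℕ × ℤ)) (J : Finset ℕ) :
    selChain Γ (J.filter (fun x => x < 0)) = [] := by
  simp [selChain]

/-- The intermediate elements of an admissible pair form a path. -/
lemma path_of_decChain (Γ : List (ℕ × ℤ)) (w : List ℤ) (J : Finset ℕ)
    (hJ : J ⊆ Finset.range Γ.length) (hd : decChain w (selChain Γ J) = true) :
    IsPath Γ (fun m => applyAll w (selChain Γ (J.filter (fun x => x < m)))) := by
  have hall : ∀ m, m ≤ Γ.length → decChain w (selChain Γ (J.filter (fun x => x < m))) = true := by
    intro m hm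
    induction hm using Nat.decreasingInduction with
    | self =>
      rwa [Finset.filter_true_of_mem]
      intro x hx
      simpa using hJ hx
    | of_succ m hm ih =>
      rw [selChain_filter_succ, decChain_append, Bool.and_eq_true] at ih
      exact ih.1
  intro m hm
  have h := hall (m + 1) hm
  simp only [selChain_filter_succ] at h ⊢
  split_ifs at h ⊢ with hmJ
  · right
    rw [decChain_append, Bool.and_eq_true] at h
    rw [applyAll_append]
    refine ⟨rfl, ?_⟩
    simpa [decChain, applyAll] using h.2
  · left; simp

/-- Every path comes from an admissible pair: select the reflections at which it moves. -/
lemma decChain_of_path (Γ : List (ℕ × ℤ)) (P : ℕ → List ℤ) (hP : IsPath Γ P) :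
    ∃ J ⊆ Finset.range Γ.length, decChain (P 0) (selChain Γ J) = true ∧
      ∀ m ≤ Γ.length, applyAll (P 0) (selChain Γ (J.filter (fun x => x < m))) = P m := by
  classical
  set J := (Finset.range Γ.length).filter (fun m => P (m + 1) ≠ P m) with hJ
  have key : ∀ m ≤ Γ.length, decChain (P 0) (selChain Γ (J.filter (fun x => x < m))) = true ∧
      applyAll (P 0) (selChain Γ (J.filter (fun x => x < m))) = P m := by
    intro m
    induction m with
    | zero => intro _; rw [selChain_filter_zero]; exact ⟨rfl, rfl⟩
    | succ m ih =>
      intro hm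
      obtain ⟨h1, h2⟩ := ih (by omega)
      rw [selChain_filter_succ, decChain_append, applyAll_append, h1, h2]
      by_cases h : P (m + 1) = P m
      · rw [if_neg (by simp [hJ, h])]
        exact ⟨rfl, by simp [applyAll, h]⟩
      · rw [if_pos (by simp only [hJ, Finset.mem_filter, Finset.mem_range]; exact ⟨hm, h⟩)]
        have h3 := (hP m hm).resolve_left h
        refine ⟨?_, by simpa [applyAll] using h3.1.symm⟩
        rw [h3.1] at h3
        simpa [decChain] using h3.2
  refine ⟨J, Finset.filter_subset _ _, ?_, fun m hm => (key m hm).2⟩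
  have := (key _ le_rfl).1
  rwa [Finset.filter_true_of_mem] at this
  intro x hx
  simpa using (Finset.mem_filter.1 hx).1

/-! ### Transitions between consecutive columns -/

/-- The part of `Γ_j(k)` after `Γ'_j`; these reflections change no position of `[1,k]` but `j`. -/
def gammaTail (n j k : ℕ) : List (ℕ × ℤ) :=
  (List.range (n - k)).map (fun r => (j, -((k + 1 + r : ℕ) : ℤ)))
    ++ [(j, -(j : ℤ))]
    ++ (List.range (n - k)).map (fun r => (j, ((n - r : ℕ) : ℤ)))

lemma gammaJK_eq (n j k : ℕ) : gammaJK n j k = gammaPrime j ++ gammaTail n j k := by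
  simp [gammaJK, gammaTail]

lemma mem_gammaPrime {j : ℕ} {t : ℕ × ℤ} :
    t ∈ gammaPrime j ↔ ∃ r, 1 ≤ r ∧ r < j ∧ t = (r, -(j : ℤ)) := by
  simp only [gammaPrime, List.mem_map, List.mem_range]
  constructor
  · rintro ⟨r, hr, rfl⟩
    exact ⟨r + 1, by omega, by omega, rfl⟩
  · rintro ⟨r, hr, hr', rfl⟩
    exact ⟨r - 1, by omega, by rw [Nat.sub_add_cancel hr]⟩

lemma mem_gammaTail {n j k : ℕ} {t : ℕ × ℤ} :
    t ∈ gammaTail n j k ↔ (∃ l, k < l ∧ l ≤ n ∧ t = (j, -(l : ℤ))) ∨ t = (j, -(j : ℤ)) ∨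
      (∃ l, k < l ∧ l ≤ n ∧ t = (j, (l : ℤ))) := by
  simp only [gammaTail, List.mem_append, List.mem_map, List.mem_range, List.mem_singleton, or_assoc]
  refine or_congr ?_ (or_congr_right ?_)
  · constructor
    · rintro ⟨r, hr, rfl⟩
      exact ⟨k + 1 + r, by omega, by omega, rfl⟩
    · rintro ⟨l, hl, hl', rfl⟩
      exact ⟨l - k - 1, by omega, by rw [show k + 1 + (l - k - 1) = l by omega]⟩
  · constructor
    · rintro ⟨r, hr, rfl⟩
      exact ⟨n - r, by omega, by omega, rfl⟩
    · rintro ⟨l, hl, hl', rfl⟩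
      exact ⟨n - l, by omega, by rw [show n - (n - l) = l by omega]⟩

lemma isRefl_of_mem_gammaPrime {n j : ℕ} (hj : j ≤ n) {t : ℕ × ℤ} (ht : t ∈ gammaPrime j) :
    IsRefl n t := by
  obtain ⟨r, hr, hr', rfl⟩ := mem_gammaPrime.1 ht
  exact .neg r j hr hr' hj

lemma isRefl_of_mem_gammaTail {n j k : ℕ} (hj : 1 ≤ j) (hjk : j ≤ k) (hk : k ≤ n) {t : ℕ × ℤ}
    (ht : t ∈ gammaTail n j k) : IsRefl n t := by
  rcases mem_gammaTail.1 ht with ⟨l, h1, h2, rfl⟩ | rfl | ⟨l, h1, h2, rfl⟩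
  · exact .neg j l hj (by omega) h2
  · exact .self j hj (by omega)
  · exact .pos j l hj (by omega) h2

lemma sle_refl (a : ℤ) : sle a a := Or.inr rfl

lemma sle_trans {a b c : ℤ} (h : sle a b) (h' : sle b c) : sle a c := by
  unfold sle slt at *; omega

lemma slt_of_sle_of_ne {a b : ℤ} (h : sle a b) (h' : a ≠ b) : slt a b := h.resolve_right h'

/-- A descending reflection raises no entry in the first `d` positions, unless it is a plain
transposition involving two of them. -/
lemma step_sle {n d : ℕ} {u : List ℤ} (hu : IsWin n u) {t : ℕ × ℤ} (ht : IsRefl n t)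
    (hd : 0 < t.2 → (d : ℤ) < t.2) (h : len (applyRefl u t) < len u) {p : ℕ} (hp : p < d) :
    sle ((applyRefl u t).getD p 0) (u.getD p 0) := by
  rw [len_lt_iff hu ht] at h
  have hlen := hu.length_eq
  rcases ht with ⟨r, j, hr, hrj, hj⟩ | ⟨r, j, hr, hrj, hj⟩ | ⟨r, hr, hj⟩
  · have hg := getD_applyRefl_neg u hr (show 1 ≤ j by omega) (by omega) (by omega)
      (show j ≤ u.length by omega)
    rw [hg]
    simp only [hg, if_true] at h
    split_ifs with h1 h2
    · subst h1; exact Or.inl h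
    · subst h2; left; unfold slt at h ⊢; omega
    · exact sle_refl _
  · have hg := getD_applyRefl_pos u hr (show 1 ≤ j by omega) (by omega) (by omega)
      (show j ≤ u.length by omega)
    rw [hg]
    simp only [hg, if_true] at h
    have := hd (by simp only; omega)
    simp only at this
    split_ifs with h1 h2
    · subst h1; exact Or.inl h
    · omega
    · exact sle_refl _
  · have hg := getD_applyRefl_self u hr (show r ≤ u.length by omega)
    rw [hg]
    simp only [hg, if_true] at h
    split_ifs with h1
    · subst h1; exact Or.inl h
    · exact sle_refl _

lemma Reach.isWin {n : ℕ} {L : List (ℕ × ℤ)} (hL : ∀ t ∈ L, IsRefl n t) {u v : List ℤ}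
    (hu : IsWin n u) (h : Reach L u v) : IsWin n v :=
  h.induct (IsWin n) hu fun _ t ht hx _ => hx.applyRefl (hL t ht)

lemma Reach.sle {n d : ℕ} {L : List (ℕ × ℤ)} (hL : ∀ t ∈ L, IsRefl n t)
    (hd : ∀ t ∈ L, 0 < t.2 → (d : ℤ) < t.2) {u v : List ℤ} (hu : IsWin n u) (h : Reach L u v)
    {p : ℕ} (hp : p < d) : sle (v.getD p 0) (u.getD p 0) :=
  (h.induct (fun x => IsWin n x ∧ HL.sle (x.getD p 0) (u.getD p 0)) ⟨hu, sle_refl _⟩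
    fun _ t ht hx hlt => ⟨hx.1.applyRefl (hL t ht),
      sle_trans (step_sle hx.1 (hL t ht) (hd t ht) hlt hp) hx.2⟩).2

lemma gammaPrime_desc (d j : ℕ) : ∀ t ∈ gammaPrime j, 0 < t.2 → (d : ℤ) < t.2 := by
  intro t ht h
  obtain ⟨r, hr, hr', rfl⟩ := mem_gammaPrime.1 ht
  simp only at h
  omega

lemma gammaTail_desc (n j d : ℕ) : ∀ t ∈ gammaTail n j d, 0 < t.2 → (d : ℤ) < t.2 := by
  intro t ht h
  rcases mem_gammaTail.1 ht with ⟨l, h1, h2, rfl⟩ | rfl | ⟨l, h1, h2, rfl⟩ <;>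
    simp only at h ⊢ <;> omega

lemma Reach.tail_getD {n j d : ℕ} (hj : 1 ≤ j) (hjd : j ≤ d) (hd : d ≤ n) {u v : List ℤ}
    (hu : IsWin n u) (h : Reach (gammaTail n j d) u v) {p : ℕ} (hp : p < d) (hpj : p ≠ j - 1) :
    v.getD p 0 = u.getD p 0 := by
  refine (h.induct (fun x => x.length = n ∧ x.getD p 0 = u.getD p 0) ⟨hu.length_eq, rfl⟩ ?_).2
  rintro x t ht ⟨hx, hxp⟩ -
  refine ⟨by rw [length_applyRefl, hx], ?_⟩
  rw [← hxp]
  rcases mem_gammaTail.1 ht with ⟨l, h1, h2, rfl⟩ | rfl | ⟨l, h1, h2, rfl⟩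
  · rw [getD_applyRefl_neg x hj (by omega) (by omega) (by omega) (by omega), if_neg hpj,
      if_neg (by omega)]
  · rw [getD_applyRefl_self x hj (by omega), if_neg hpj]
  · rw [getD_applyRefl_pos x hj (by omega) (by omega) (by omega) (by omega), if_neg hpj,
      if_neg (by omega)]

lemma cycleApply_eq (u : List ℤ) (R : List ℕ) (j : ℕ) :
    cycleApply u R j = applyAll u (R.map fun r => (r, -(j : ℤ))) := by
  simp [cycleApply, applyAll, List.foldl_map]

lemma length_cycleApply (u : List ℤ) (R : List ℕ) (j : ℕ) :
    (cycleApply u R j).length = u.length := by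
  induction R generalizing u with
  | nil => rfl
  | cons r R ih => exact (ih _).trans (length_applyRefl _ _)

/-- A subsequence of `Γ'_j` is a list `(r_1,-j), …, (r_p,-j)` with `r_1 < ⋯ < r_p < j`. -/
lemma Reach.exists_cycle {j : ℕ} {u v : List ℤ} (h : Reach (gammaPrime j) u v) :
    ∃ R : List ℕ, R.IsChain (· < ·) ∧ (∀ r ∈ R, 1 ≤ r ∧ r < j) ∧ v = cycleApply u R j := by
  obtain ⟨T, hT, -, rfl⟩ := h
  obtain ⟨R', hR', rfl⟩ := List.sublist_map_iff.1 hT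
  refine ⟨R'.map (· + 1), ?_, ?_, ?_⟩
  · rw [List.isChain_iff_pairwise, List.pairwise_map]
    have := (List.pairwise_lt_range (n := j - 1)).sublist hR'
    exact this.imp (by omega)
  · intro r hr
    obtain ⟨s, hs, rfl⟩ := List.mem_map.1 hr
    have := List.mem_range.1 (hR'.subset hs)
    omega
  · rw [cycleApply_eq, List.map_map]
    rfl

lemma getD_take (u : List ℤ) (d p : ℕ) :
    (u.take d).getD p 0 = if p < d then u.getD p 0 else 0 := by
  simp only [List.getD_eq_getElem?_getD, List.getElem?_take]
  split_ifs <;> simp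

lemma take_applyRefl {d r j : ℕ} (u : List ℤ) (hr : 1 ≤ r) (hrj : r < j) (hj : j ≤ d)
    (hd : d ≤ u.length) :
    (applyRefl u (r, -(j : ℤ))).take d = applyRefl (u.take d) (r, -(j : ℤ)) := by
  have hl : (u.take d).length = d := by simp [hd]
  apply ext_getD (by simp [length_applyRefl])
  intro p hp
  have hp' : p < d := by simp [length_applyRefl] at hp; omega
  rw [getD_take, if_pos hp', getD_applyRefl_neg _ hr (by omega) (by omega) (by omega) (by omega),
    getD_applyRefl_neg _ hr (by omega) (by omega) (by omega) (by omega)]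
  simp only [getD_take, if_pos hp', if_pos (show r - 1 < d by omega),
    if_pos (show j - 1 < d by omega)]

lemma take_cycleApply {d j : ℕ} (u : List ℤ) (R : List ℕ) (hR : ∀ r ∈ R, 1 ≤ r ∧ r < j)
    (hj : j ≤ d) (hd : d ≤ u.length) :
    (cycleApply u R j).take d = cycleApply (u.take d) R j := by
  induction R generalizing u with
  | nil => rfl
  | cons r R ih =>
    have h1 := hR r (by simp)
    have := ih (applyRefl u (r, -(j : ℤ))) (fun s hs => hR s (by simp [hs]))
      (by rw [length_applyRefl]; exact hd)
    rw [take_applyRefl u h1.1 h1.2 hj hd] at this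
    exact this

lemma cycleApply_induct {j : ℕ} (p : List ℤ → Prop) (R : List ℕ)
    (step : ∀ x, ∀ r ∈ R, p x → p (applyRefl x (r, -(j : ℤ)))) (u : List ℤ) (hu : p u) :
    p (cycleApply u R j) := by
  induction R generalizing u with
  | nil => exact hu
  | cons r R ih =>
    exact ih (fun x s hs => step x s (by simp [hs])) _ (step u r (by simp) hu)

/-- `cycleApply` with the reversed list undoes `cycleApply`. -/
lemma cycleApply_reverse {j : ℕ} (u : List ℤ) (R : List ℕ) (hR : ∀ r ∈ R, 1 ≤ r ∧ r < j)
    (hj : j ≤ u.length) : cycleApply (cycleApply u R j) R.reverse j = u := by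
  induction R generalizing u with
  | nil => rfl
  | cons r R ih =>
    have h1 := hR r (by simp)
    have h2 := ih (applyRefl u (r, -(j : ℤ))) (fun s hs => hR s (by simp [hs]))
      (by rw [length_applyRefl]; exact hj)
    have h3 : cycleApply u (r :: R) j = cycleApply (applyRefl u (r, -(j : ℤ))) R j := rfl
    rw [h3, List.reverse_cons]
    unfold cycleApply at h2 ⊢
    rw [List.foldl_append, h2]
    exact applyRefl_applyRefl (.neg r j h1.1 h1.2 hj) u le_rfl

lemma cycleApply_getD_of_notMem {j p : ℕ} (u : List ℤ) (R : List ℕ)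
    (hR : ∀ r ∈ R, 1 ≤ r ∧ r < j) (hj : j ≤ u.length) (hp : p + 1 ∉ R) (hpj : p + 1 ≠ j) :
    (cycleApply u R j).getD p 0 = u.getD p 0 := by
  refine (cycleApply_induct (fun x => x.length = u.length ∧ x.getD p 0 = u.getD p 0) R ?_ u
    ⟨rfl, rfl⟩).2
  rintro x r hr ⟨h1, h2⟩
  have h3 := hR r hr
  have h4 : p + 1 ≠ r := fun h => hp (h ▸ hr)
  refine ⟨by rw [length_applyRefl, h1], ?_⟩
  rw [getD_applyRefl_neg _ h3.1 (by omega) (by omega) (by omega) (by omega), if_neg (by omega),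
    if_neg (by omega), h2]

/-- Position `r_t` is changed only by the `t`-th reflection `(r_t, -j)`; hence weakly decreasing
rows force every step of the cycle to be a descent. -/
lemma decChain_cycle {n j : ℕ} {u : List ℤ} (hu : IsWin n u) (R : List ℕ)
    (hR : ∀ r ∈ R, 1 ≤ r ∧ r < j) (hnd : R.Nodup) (hj : j ≤ n)
    (h : ∀ r ∈ R, sle ((cycleApply u R j).getD (r - 1) 0) (u.getD (r - 1) 0)) :
    decChain u (R.map fun r => (r, -(j : ℤ))) = true := by
  induction R generalizing u with
  | nil => rfl
  | cons r R ih =>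
    have h1 := hR r (by simp)
    have hR' : ∀ s ∈ R, 1 ≤ s ∧ s < j := fun s hs => hR s (by simp [hs])
    have ht : IsRefl n (r, -(j : ℤ)) := .neg r j h1.1 h1.2 hj
    have hu' := hu.applyRefl ht
    have hc : cycleApply u (r :: R) j = cycleApply (applyRefl u (r, -(j : ℤ))) R j := rfl
    rw [List.nodup_cons] at hnd
    simp only [List.map_cons, decChain, Bool.and_eq_true, decide_eq_true_eq]
    constructor
    · rw [len_lt_iff hu ht]
      refine slt_of_sle_of_ne ?_ (applyRefl_ne hu ht)
      have h2 := h r (by simp)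
      rw [hc, cycleApply_getD_of_notMem _ R hR' (by rw [hu'.length_eq]; exact hj)
        (by rw [Nat.sub_add_cancel h1.1]; exact hnd.1) (by omega)] at h2
      exact h2
    · apply ih hu' hR' hnd.2
      intro s hs
      have h2 := h s (by simp [hs])
      have h3 := hR' s hs
      have h4 : s ≠ r := fun e => hnd.1 (e ▸ hs)
      have h5 := hu.length_eq
      rw [hc] at h2
      rwa [getD_applyRefl_neg u h1.1 (by omega) (by omega) (by omega) (by omega),
        if_neg (by omega), if_neg (by omega)]

/-- Lifting a primed transition: a window extending the right column is reached from one extending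
the left column. -/
lemma exists_lift_cycle {n d j : ℕ} {u : List ℤ} (hu : IsWin n u) {D : List ℤ}
    (hD : D.length = d) (hd : d ≤ n) {R : List ℕ} (hR : sortedR R j d)
    (hE : u.take d = cycleApply D R j)
    (hrow : ∀ p < d, p ≠ j - 1 → sle (u.getD p 0) (D.getD p 0)) :
    ∃ u', IsWin n u' ∧ u'.take d = D ∧ Reach (gammaPrime j) u' u := by
  obtain ⟨hch, hRb, hj1, hjd⟩ := hR
  replace hch : R.IsChain (· < ·) := hch
  have hpw := List.isChain_iff_pairwise.1 hch
  have hlen := hu.length_eq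
  have hRr : ∀ r ∈ R.reverse, 1 ≤ r ∧ r < j := fun r hr => hRb r (by simpa using hr)
  set u' := cycleApply u R.reverse j with hu'
  have hwin : IsWin n u' := cycleApply_induct (IsWin n) R.reverse
    (fun x r hr hx => hx.applyRefl (.neg r j (hRr r hr).1 (hRr r hr).2 (by omega))) u hu
  have htake : u'.take d = D := by
    rw [hu', take_cycleApply u _ hRr hjd (by omega), hE, cycleApply_reverse D R hRb (by omega)]
  have hback : cycleApply u' R j = u := by
    have := cycleApply_reverse u R.reverse hRr (by omega)
    rwa [List.reverse_reverse] at this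
  refine ⟨u', hwin, htake, R.map fun r => (r, -(j : ℤ)), ?_, ?_, ?_⟩
  · have hsub : List.Sublist (R.map (· - 1)) (List.range (j - 1)) := by
      have hp1 : (R.map (· - 1)).Pairwise (· < ·) := by
        rw [List.pairwise_map]
        refine hpw.imp_of_mem fun {a b} ha hb hab => ?_
        have := hRb a ha
        omega
      apply List.sublist_of_subperm_of_pairwise (r := (· < ·)) _ hp1 List.pairwise_lt_range
      apply List.subperm_of_subset hp1.nodup
      intro x hx
      obtain ⟨r, hr, rfl⟩ := List.mem_map.1 hx
      have := hRb r hr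
      simp only [List.mem_range]
      omega
    have := hsub.map (fun r => (r + 1, -(j : ℤ)))
    rw [List.map_map] at this
    convert this using 1
    · apply List.map_congr_left
      intro r hr
      have := hRb r hr
      simp [Nat.sub_add_cancel this.1]
    · rfl
  · apply decChain_cycle hwin R hRb hpw.nodup (by omega)
    intro r hr
    have h1 := hRb r hr
    rw [hback]
    have h2 := hrow (r - 1) (by omega) (by omega)
    rwa [← htake, getD_take, if_pos (by omega)] at h2
  · rw [← cycleApply_eq, hback]

/-- Lifting the change of a single entry: a window whose first `d` entries agree with `D` except
for a smaller entry in position `j` is reached, by at most one reflection of the tail of `Γ_j(d)`,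
from a window beginning with `D`. -/
lemma exists_lift_tail {n d j : ℕ} {u : List ℤ} (hu : IsWin n u) (hj : 1 ≤ j) (hjd : j ≤ d)
    (hd : d ≤ n) {D : List ℤ} (hD : D.length = d) (hdist : colDistinct D)
    (hent : ∀ a ∈ D, 1 ≤ a.natAbs ∧ a.natAbs ≤ n)
    (heq : ∀ p < d, p ≠ j - 1 → u.getD p 0 = D.getD p 0)
    (hle : sle (u.getD (j - 1) 0) (D.getD (j - 1) 0)) :
    ∃ u', IsWin n u' ∧ u'.take d = D ∧ Reach (gammaTail n j d) u' u := by
  have hlen := hu.length_eq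
  -- it suffices to find a reflection of the tail that puts the entry of `D` in position `j`
  have main : ∀ t ∈ gammaTail n j d, (applyRefl u t).getD (j - 1) 0 = D.getD (j - 1) 0 →
      (∀ p < d, p ≠ j - 1 → (applyRefl u t).getD p 0 = u.getD p 0) →
      ∃ u', IsWin n u' ∧ u'.take d = D ∧ Reach (gammaTail n j d) u' u := by
    intro t ht h1 h2
    have hr := isRefl_of_mem_gammaTail hj hjd hd ht
    have ht1 : t.1 = j := by
      rcases mem_gammaTail.1 ht with ⟨l, _, _, rfl⟩ | rfl | ⟨l, _, _, rfl⟩ <;> rfl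
    have hw := hu.applyRefl hr
    have hinv := applyRefl_applyRefl hr u hlen.ge
    refine ⟨applyRefl u t, hw, ?_, ?_⟩
    · apply ext_getD (by simp [hw.length_eq, hD, hd])
      intro p hp
      have hp : p < d := by simp at hp; omega
      rw [getD_take, if_pos hp]
      by_cases hpj : p = j - 1
      · rw [hpj, h1]
      · rw [h2 p hp hpj, heq p hp hpj]
    · have := Reach.single ht (u := applyRefl u t) (by
        rw [len_lt_iff hw hr]
        refine slt_of_sle_of_ne ?_ (applyRefl_ne hw hr)
        rw [hinv, ht1, h1]
        exact hle)
      rwa [hinv] at this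
  by_cases hsame : u.getD (j - 1) 0 = D.getD (j - 1) 0
  · refine ⟨u, hu, ?_, Reach.refl _ _⟩
    apply ext_getD (by simp [hlen, hD, hd])
    intro p hp
    have hp : p < d := by simp at hp; omega
    rw [getD_take, if_pos hp]
    by_cases hpj : p = j - 1
    · rw [hpj, hsame]
    · exact heq p hp hpj
  have hb := (entries_iff n D).1 hent (j - 1) (by omega)
  obtain ⟨p, hpn, hp⟩ := hu.exists_entry hb.1 hb.2
  by_cases hpj : p = j - 1
  · subst hpj
    apply main (j, -(j : ℤ)) (mem_gammaTail.2 (Or.inr (Or.inl rfl)))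
    · rw [getD_applyRefl_self u hj (by omega), if_pos rfl]
      omega
    · intro q hq hqj
      rw [getD_applyRefl_self u hj (by omega), if_neg hqj]
  have hpd : d ≤ p := by
    by_contra hcon
    have h1 := heq p (by omega) hpj
    have h2 := hdist.ne hpj (by omega) (by omega)
    omega
  rcases hp with hp | hp
  · apply main (j, ((p + 1 : ℕ) : ℤ))
      (mem_gammaTail.2 (Or.inr (Or.inr ⟨p + 1, by omega, by omega, rfl⟩)))
    · rw [getD_applyRefl_pos u hj (by omega) (by omega) (by omega) (by omega), if_pos rfl]
      simpa using hp
    · intro q hq hqj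
      rw [getD_applyRefl_pos u hj (by omega) (by omega) (by omega) (by omega), if_neg hqj,
        if_neg (by omega)]
  · apply main (j, -((p + 1 : ℕ) : ℤ))
      (mem_gammaTail.2 (Or.inl ⟨p + 1, by omega, by omega, rfl⟩))
    · rw [getD_applyRefl_neg u hj (by omega) (by omega) (by omega) (by omega), if_pos rfl]
      simp only [Nat.add_sub_cancel]
      omega
    · intro q hq hqj
      rw [getD_applyRefl_neg u hj (by omega) (by omega) (by omega) (by omega), if_neg hqj,
        if_neg (by omega)]

/-! ### The factors of the `λ`-chain -/

/-- The factor of `Γ` labelled by `s`: `Γ'_{ik}` for `s = (true, i, k)` and `Γ_{ij}` for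
`s = (false, i, j)`. -/
def fac (n : ℕ) (lam : Fin n → ℕ) (s : Bool × ℕ × ℕ) : List (ℕ × ℤ) :=
  if s.1 then gammaPrime s.2.2 else gammaJK n s.2.2 (conj n lam s.2.1)

/-- The labels of the factors of `Γ^i`, in order, when `λ'_i = c`. -/
def blockSteps (c i : ℕ) : List (Bool × ℕ × ℕ) :=
  (List.range (c - 1)).map (fun r => (true, i, r + 2)) ++
    (List.range c).map (fun r => (false, i, r + 1))

/-- The labels of the factors of `Γ^i Γ^{i-1} ⋯ Γ^1`, in order. -/
def stepsDown (n : ℕ) (lam : Fin n → ℕ) : ℕ → List (Bool × ℕ × ℕ)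
  | 0 => []
  | i + 1 => blockSteps (conj n lam (i + 1)) (i + 1) ++ stepsDown n lam i

section Chain
variable {n : ℕ} {lam : Fin n → ℕ}

lemma flatMap_blockSteps (i : ℕ) :
    (blockSteps (conj n lam i) i).flatMap (fac n lam) = gammaChain n (conj n lam i) := by
  rw [blockSteps, gammaChain, List.flatMap_append, List.flatMap_def, List.flatMap_def,
    List.map_map, List.map_map]
  rfl

lemma lambdaChain_eq :
    lambdaChain n lam = (stepsDown n lam (lamOne n lam)).flatMap (fac n lam) := by
  unfold lambdaChain
  generalize lamOne n lam = L
  induction L with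
  | zero => rfl
  | succ L ih =>
    rw [List.range_succ_eq_map, stepsDown, List.flatMap_append, ← ih, flatMap_blockSteps]
    simp [List.map_map, Function.comp_def]

lemma conj_le (i : ℕ) : conj n lam i ≤ n := by
  unfold conj
  exact (Finset.card_filter_le _ _).trans (by simp)

lemma conj_anti {i i' : ℕ} (h : i ≤ i') : conj n lam i' ≤ conj n lam i := by
  unfold conj
  apply Finset.card_le_card
  intro x hx
  simp only [Finset.mem_filter, Finset.mem_univ, true_and] at hx ⊢
  omega

lemma one_le_conj {i : ℕ} (hi : 1 ≤ i) (hi' : i ≤ lamOne n lam) : 1 ≤ conj n lam i := by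
  unfold lamOne at hi'
  rw [Finset.le_sup_iff (show (⊥ : ℕ) < i from hi)] at hi'
  obtain ⟨b, -, hb⟩ := hi'
  unfold conj
  exact Finset.card_pos.2 ⟨b, by simpa using hb⟩

lemma conj_one (hpos : ∀ i, 0 < lam i) : conj n lam 1 = n := by
  unfold conj
  rw [Finset.filter_true_of_mem (p := fun j => 1 ≤ lam j) (fun x _ => hpos x)]
  simp

lemma mem_stepsDown {L : ℕ} {s : Bool × ℕ × ℕ} (h : s ∈ stepsDown n lam L) :
    1 ≤ s.2.1 ∧ s.2.1 ≤ L ∧ 1 ≤ s.2.2 ∧ s.2.2 ≤ conj n lam s.2.1 := by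
  induction L with
  | zero => simp [stepsDown] at h
  | succ L ih =>
    simp only [stepsDown, blockSteps, List.mem_append, List.mem_map, List.mem_range] at h
    rcases h with (⟨r, hr, rfl⟩ | ⟨r, hr, rfl⟩) | h
    · simp only; omega
    · simp only; omega
    · have := ih h; omega

lemma isRefl_of_mem_gammaJK {j k : ℕ} (hj : 1 ≤ j) (hjk : j ≤ k) (hk : k ≤ n) {t : ℕ × ℤ}
    (ht : t ∈ gammaJK n j k) : IsRefl n t := by
  rw [gammaJK_eq, List.mem_append] at ht
  rcases ht with ht | ht
  · exact isRefl_of_mem_gammaPrime (by omega) ht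
  · exact isRefl_of_mem_gammaTail hj hjk hk ht

lemma isRefl_of_mem_lambdaChain {t : ℕ × ℤ} (ht : t ∈ lambdaChain n lam) : IsRefl n t := by
  rw [lambdaChain_eq, List.mem_flatMap] at ht
  obtain ⟨⟨b, i, k⟩, hs, ht⟩ := ht
  have h1 := mem_stepsDown hs
  have h2 := conj_le (n := n) (lam := lam) i
  simp only at h1
  cases b
  · exact isRefl_of_mem_gammaJK h1.2.2.1 h1.2.2.2 h2 ht
  · exact isRefl_of_mem_gammaPrime (j := k) (h1.2.2.2.trans h2) ht

lemma sum_map_range (g : ℕ → ℕ) (m : ℕ) :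
    ((List.range m).map g).sum = ∑ j ∈ Finset.range m, g j := by
  induction m with
  | zero => rfl
  | succ m ih => simp [List.range_succ, Finset.sum_range_succ, ih]

lemma range_split {m N : ℕ} (h : m < N) : ∃ l, List.range N = List.range m ++ m :: l := by
  obtain ⟨k, rfl⟩ : ∃ k, N = m + (k + 1) := ⟨N - m - 1, by omega⟩
  rw [List.range_add, List.range_succ_eq_map]
  exact ⟨_, rfl⟩

lemma exists_block {L i : ℕ} (hi : 1 ≤ i) (hi' : i ≤ L) :
    ∃ pre post, stepsDown n lam L = pre ++ blockSteps (conj n lam i) i ++ post ∧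
      (pre.flatMap (fac n lam)).length =
        ∑ r ∈ Finset.Ico (i + 1) (L + 1), (gammaChain n (conj n lam r)).length := by
  induction L with
  | zero => omega
  | succ L ih =>
    rcases Nat.lt_or_ge L i with h | h
    · obtain rfl : i = L + 1 := by omega
      exact ⟨[], stepsDown n lam L, rfl, by simp⟩
    · obtain ⟨pre, post, h1, h2⟩ := ih h
      refine ⟨blockSteps (conj n lam (L + 1)) (L + 1) ++ pre, post, ?_, ?_⟩
      · rw [stepsDown, h1]; simp
      · rw [List.flatMap_append, List.length_append, h2, flatMap_blockSteps,
          Finset.sum_Ico_succ_top (show i + 1 ≤ L + 1 by omega)]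
        omega

lemma exists_stepP {i k : ℕ} (h : validP n lam i k) :
    ∃ pre post, stepsDown n lam (lamOne n lam) = pre ++ (true, i, k) :: post ∧
      (pre.flatMap (fac n lam)).length = offsetP n lam i k := by
  obtain ⟨h1, h2, h3, h4⟩ := h
  obtain ⟨pre, post, h5, h6⟩ := exists_block (lam := lam) h1 h2
  obtain ⟨l, hl⟩ := range_split (show k - 2 < conj n lam i - 1 by omega)
  rw [blockSteps, hl] at h5
  refine ⟨pre ++ (List.range (k - 2)).map (fun r => (true, i, r + 2)),
    l.map (fun r => (true, i, r + 2)) ++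
      ((List.range (conj n lam i)).map (fun r => (false, i, r + 1)) ++ post), ?_, ?_⟩
  · rw [h5, List.map_append, List.map_cons, Nat.sub_add_cancel h3]
    simp only [List.append_assoc, List.cons_append]
  · rw [List.flatMap_append, List.length_append, h6, offsetP, offsetBlock, List.length_flatMap,
      List.map_map, sum_map_range, Finset.sum_Ico_eq_sum_range _ 2]
    congr 1
    refine Finset.sum_congr rfl fun r _ => ?_
    simp [fac, add_comm]

lemma exists_stepU {i j : ℕ} (hi : 1 ≤ i) (hi' : i ≤ lamOne n lam) (hj : 1 ≤ j)
    (hj' : j ≤ conj n lam i) :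
    ∃ pre post, stepsDown n lam (lamOne n lam) = pre ++ (false, i, j) :: post ∧
      (pre.flatMap (fac n lam)).length = offsetU n lam i j := by
  obtain ⟨pre, post, h5, h6⟩ := exists_block (lam := lam) hi hi'
  obtain ⟨l, hl⟩ := range_split (show j - 1 < conj n lam i by omega)
  rw [blockSteps, hl] at h5
  refine ⟨pre ++ ((List.range (conj n lam i - 1)).map (fun r => (true, i, r + 2)) ++
    (List.range (j - 1)).map (fun r => (false, i, r + 1))),
    l.map (fun r => (false, i, r + 1)) ++ post, ?_, ?_⟩
  · rw [h5, List.map_append, List.map_cons, Nat.sub_add_cancel hj]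
    simp only [List.append_assoc, List.cons_append]
  · rw [List.flatMap_append, List.length_append, h6, offsetU, offsetBlock, List.flatMap_append,
      List.length_append, List.length_flatMap, List.length_flatMap,
      List.map_map, List.map_map, sum_map_range, sum_map_range, Finset.sum_Ico_eq_sum_range,
      Finset.sum_Ico_eq_sum_range _ 2, Finset.sum_Ico_eq_sum_range _ 1, add_assoc]
    congr 1
    rw [show conj n lam i + 1 - 2 = conj n lam i - 1 by omega]
    congr 1
    · refine Finset.sum_congr rfl fun r _ => ?_
      simp [fac, add_comm]
    · refine Finset.sum_congr rfl fun r _ => ?_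
      simp [fac, add_comm]

lemma offsetP_succ {i k : ℕ} (hk : 2 ≤ k) :
    offsetP n lam i (k + 1) = offsetP n lam i k + (gammaPrime k).length := by
  rw [offsetP, offsetP, Finset.sum_Ico_succ_top hk, add_assoc]

lemma offsetU_one (i : ℕ) : offsetU n lam i 1 = offsetP n lam i (conj n lam i + 1) := by
  simp [offsetU, offsetP]

lemma offsetU_succ {i j : ℕ} (hj : 1 ≤ j) :
    offsetU n lam i (j + 1) =
      offsetU n lam i j + (gammaJK n j (conj n lam i)).length := by
  rw [offsetU, offsetU, Finset.sum_Ico_succ_top hj, ← add_assoc]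

lemma offsetU_last {i : ℕ} (hi : 2 ≤ i) (hi' : i ≤ lamOne n lam) :
    offsetU n lam i (conj n lam i + 1) = offsetP n lam (i - 1) 2 := by
  have h1 : offsetBlock n lam (i - 1) =
      offsetBlock n lam i + (gammaChain n (conj n lam i)).length := by
    rw [offsetBlock, offsetBlock, Nat.sub_add_cancel (by omega : 1 ≤ i),
      Finset.sum_eq_sum_Ico_succ_bot (by omega), add_comm]
  have h2 : (gammaChain n (conj n lam i)).length =
      (∑ k ∈ Finset.Ico 2 (conj n lam i + 1), (gammaPrime k).length) +
        ∑ j' ∈ Finset.Ico 1 (conj n lam i + 1), (gammaJK n j' (conj n lam i)).length := by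
    rw [gammaChain, List.length_append, List.length_flatten, List.length_flatten, List.map_map,
      List.map_map, sum_map_range, sum_map_range, Finset.sum_Ico_eq_sum_range,
      Finset.sum_Ico_eq_sum_range, show conj n lam i + 1 - 2 = conj n lam i - 1 by omega,
      show conj n lam i + 1 - 1 = conj n lam i by omega]
    congr 1
    · refine Finset.sum_congr rfl fun r _ => ?_
      simp [add_comm]
    · refine Finset.sum_congr rfl fun r _ => ?_
      simp [add_comm]
  simp only [offsetU, offsetP, Finset.Ico_self, Finset.sum_empty, add_zero, h1, h2, add_assoc]

lemma offset_le_of_decomp {S pre post : List (Bool × ℕ × ℕ)} {s : Bool × ℕ × ℕ}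
    (h : S = pre ++ s :: post) :
    (pre.flatMap (fac n lam)).length ≤ (S.flatMap (fac n lam)).length := by
  rw [h, List.flatMap_append, List.length_append]
  omega

lemma reach_stepP {P : ℕ → List ℤ} (hP : IsPath (lambdaChain n lam) P) {i k : ℕ}
    (h : validP n lam i k) :
    Reach (gammaPrime k) (P (offsetP n lam i k)) (P (offsetP n lam i (k + 1))) := by
  obtain ⟨pre, post, h1, h2⟩ := exists_stepP h
  rw [lambdaChain_eq, h1, List.flatMap_append, List.flatMap_cons, ← List.append_assoc] at hP
  have := reach_of_path _ _ _ _ hP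
  rw [h2] at this
  rw [offsetP_succ h.2.2.1]
  exact this

lemma reach_stepU {P : ℕ → List ℤ} (hP : IsPath (lambdaChain n lam) P) {i j : ℕ}
    (hi : 1 ≤ i) (hi' : i ≤ lamOne n lam) (hj : 1 ≤ j) (hj' : j ≤ conj n lam i) :
    Reach (gammaJK n j (conj n lam i)) (P (offsetU n lam i j)) (P (offsetU n lam i (j + 1))) := by
  obtain ⟨pre, post, h1, h2⟩ := exists_stepU hi hi' hj hj'
  rw [lambdaChain_eq, h1, List.flatMap_append, List.flatMap_cons, ← List.append_assoc] at hP
  have := reach_of_path _ _ _ _ hP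
  rw [h2] at this
  rw [offsetU_succ hj]
  exact this

lemma IsPath.isWin {P : ℕ → List ℤ} (hP : IsPath (lambdaChain n lam) P) (h0 : IsWin n (P 0))
    {m : ℕ} (hm : m ≤ (lambdaChain n lam).length) : IsWin n (P m) := by
  induction m with
  | zero => exact h0
  | succ m ih =>
    have := ih (by omega)
    rcases hP m hm with h | ⟨h, -⟩
    · rwa [h]
    · rw [h]
      apply this.applyRefl
      apply isRefl_of_mem_lambdaChain
      rw [List.getD_eq_getElem _ _ (by omega)]
      exact List.getElem_mem _

end Chain

/-! ### Images of admissible pairs satisfy the conditions on fillings -/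

lemma colDistinct_take {c : List ℤ} (h : colDistinct c) (d : ℕ) : colDistinct (c.take d) := by
  intro p q hpq hq
  have : q < d ∧ q < c.length := by simpa using hq
  rw [getD_take, getD_take, if_pos (by omega), if_pos this.1]
  exact h p q hpq this.2

theorem fMap_mem_FSet {n : ℕ} {lam : Fin n → ℕ} {w : List ℤ} {J : Finset ℕ}
    (h : (w, J) ∈ ASet n lam) : fMap n lam w J ∈ FSet n lam := by
  obtain ⟨hw, hJ, hd⟩ := h
  simp only at hw hJ hd
  have hP := path_of_decChain _ w J hJ hd
  change IsPath (lambdaChain n lam) (piW n lam w J) at hP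
  have h0 : IsWin n (piW n lam w J 0) := by
    rw [piW, selChain_filter_zero]
    exact isWin_of_mem hw
  have hCp : ∀ {i k}, validP n lam i k →
      (fMap n lam w J).Cp i k = (piW n lam w J (offsetP n lam i k)).take (conj n lam i) :=
    fun h => if_pos h
  have hCu : ∀ {i k}, validU n lam i k →
      (fMap n lam w J).Cu i k = (piW n lam w J (offsetU n lam i k)).take (conj n lam i) :=
    fun h => if_pos h
  have hwP : ∀ {i k}, validP n lam i k → IsWin n (piW n lam w J (offsetP n lam i k)) := by
    intro i k h
    obtain ⟨pre, post, h1, h2⟩ := exists_stepP h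
    apply hP.isWin h0
    rw [lambdaChain_eq, ← h2]
    exact offset_le_of_decomp h1
  have hwU : ∀ {i k}, validU n lam i k → IsWin n (piW n lam w J (offsetU n lam i k)) := by
    intro i k h
    obtain ⟨pre, post, h1, h2⟩ := exists_stepU h.1 h.2.1 h.2.2.1 h.2.2.2.1
    apply hP.isWin h0
    rw [lambdaChain_eq, ← h2]
    exact offset_le_of_decomp h1
  have hc := fun i => conj_le (n := n) (lam := lam) i
  -- the right neighbours, read off from the path
  have hNp : ∀ {i k}, validP n lam i k → CpNxt n lam (fMap n lam w J) i k =
      (piW n lam w J (offsetP n lam i (k + 1))).take (conj n lam i) := by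
    intro i k h
    unfold CpNxt
    obtain ⟨h1, h2, h3, h4⟩ := h
    split_ifs with hk
    · exact hCp ⟨h1, h2, by omega, hk⟩
    · rw [hCu ⟨h1, h2, le_rfl, by omega, fun _ => rfl⟩, offsetU_one,
        show k = conj n lam i by omega]
  have hNu : ∀ {i j}, 2 ≤ i → validU n lam i j →
      (CuNxt n lam (fMap n lam w J) i j).take (conj n lam i) =
      (piW n lam w J (offsetU n lam i (j + 1))).take (conj n lam i) := by
    intro i j hi h
    unfold CuNxt
    obtain ⟨h1, h2, h3, h4, -⟩ := h
    have hanti := conj_anti (n := n) (lam := lam) (show i - 1 ≤ i by omega)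
    split_ifs with hj hc2
    · rw [hCu ⟨h1, h2, by omega, hj, by omega⟩, List.take_take, min_self]
    · rw [hCp ⟨by omega, by omega, le_rfl, hc2⟩, List.take_take, min_eq_left hanti,
        show j = conj n lam i by omega, offsetU_last hi h2]
    · rw [hCu ⟨by omega, by omega, le_rfl, by omega, fun _ => rfl⟩, List.take_take,
        min_eq_left hanti, show j = conj n lam i by omega, offsetU_last hi h2, offsetU_one,
        show conj n lam (i - 1) + 1 = 2 by omega]
  have hPr : ∀ {i k}, validP n lam i k → ∀ t ∈ gammaPrime k, IsRefl n t :=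
    fun h t ht => isRefl_of_mem_gammaPrime (h.2.2.2.trans (hc _)) ht
  refine ⟨?_, ?_, ?_, ?_, ?_, ?_, ?_, ?_, ?_, ?_⟩
  · refine fun i k => ⟨fun h => ?_, fun h => if_neg h⟩
    rw [hCp h, List.length_take, (hwP h).length_eq, min_eq_left (hc i)]
  · refine fun i j => ⟨fun h => ?_, fun h => if_neg h⟩
    rw [hCu h, List.length_take, (hwU h).length_eq, min_eq_left (hc i)]
  · intro i k h a ha
    rw [hCp h] at ha
    exact (hwP h).entries a (List.mem_of_mem_take ha)
  · intro i j h a ha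
    rw [hCu h] at ha
    exact (hwU h).entries a (List.mem_of_mem_take ha)
  · intro i k h r hr hr'
    rw [hNp h, hCp h, getD_take, getD_take, if_pos (by omega), if_pos (by omega)]
    exact (reach_stepP hP h).sle (hPr h) (gammaPrime_desc (conj n lam i) k) (hwP h) (by omega)
  · intro i j hi h r hr hr'
    have e : (CuNxt n lam (fMap n lam w J) i j).getD (r - 1) 0 =
        (piW n lam w J (offsetU n lam i (j + 1))).getD (r - 1) 0 := by
      have := congrArg (fun l => l.getD (r - 1) 0) (hNu hi h)
      simpa only [getD_take, if_pos (show r - 1 < conj n lam i by omega)] using this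
    rw [e, hCu h, getD_take, if_pos (by omega)]
    refine (reach_stepU hP h.1 h.2.1 h.2.2.1 h.2.2.2.1).sle (d := conj n lam i)
      (fun t ht => isRefl_of_mem_gammaJK h.2.2.1 h.2.2.2.1 (hc i) ht) ?_ (hwU h) (by omega)
    intro t ht
    rw [gammaJK_eq, List.mem_append] at ht
    rcases ht with ht | ht
    · exact gammaPrime_desc _ _ t ht
    · exact gammaTail_desc _ _ _ t ht
  · intro i k h
    rw [hCp h]
    exact colDistinct_take (hwP h).distinct _
  · intro i j h
    rw [hCu h]
    exact colDistinct_take (hwU h).distinct _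
  · intro i k h
    obtain ⟨R, hR1, hR2, hR3⟩ := (reach_stepP hP h).exists_cycle
    refine ⟨R, ⟨hR1, hR2, by have := h.2.2.1; omega, h.2.2.2⟩, ?_⟩
    rw [hNp h, hCp h, hR3]
    exact take_cycleApply _ _ hR2 h.2.2.2 ((hc i).trans (hwP h).length_eq.ge)
  · intro i j hi h
    have hreach := reach_stepU hP h.1 h.2.1 h.2.2.1 h.2.2.2.1
    have hv : IsWin n (piW n lam w J (offsetU n lam i (j + 1))) :=
      hreach.isWin (fun t ht => isRefl_of_mem_gammaJK h.2.2.1 h.2.2.2.1 (hc i) ht) (hwU h)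
    rw [gammaJK_eq] at hreach
    obtain ⟨v, hr1, hr2⟩ := hreach.of_append
    have hj := h.2.2.1
    have hjc := h.2.2.2.1
    have hv1 : IsWin n v := hr1.isWin
      (fun t ht => isRefl_of_mem_gammaPrime (hjc.trans (hc i)) ht) (hwU h)
    obtain ⟨R, hR1, hR2, hR3⟩ := hr1.exists_cycle
    have hlen := hv.length_eq
    refine ⟨R, ⟨hR1, hR2, hj, hjc⟩, ?_⟩
    have e : cycleApply ((fMap n lam w J).Cu i j) R j = v.take (conj n lam i) := by
      rw [hCu h, hR3]
      exact (take_cycleApply _ _ hR2 hjc ((hc i).trans (hwU h).length_eq.ge)).symm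
    unfold unprimedTrans
    rw [e, hNu hi h]
    simp only [getD_take]
    have hstay : ∀ r, 1 ≤ r → r ≤ conj n lam i → r ≠ j →
        (piW n lam w J (offsetU n lam i (j + 1))).getD (r - 1) 0 = v.getD (r - 1) 0 :=
      fun r h1 h2 h3 => hr2.tail_getD hj hjc (hc i) hv1 (by omega) (by omega)
    have hci := hc i
    refine ⟨?_, ?_, ?_⟩
    · intro r h1 h2 h3
      rw [if_pos (by omega), if_pos (by omega), hstay r h1 h2 h3]
    · intro r h1 h2 h3
      rw [if_pos (by omega), if_pos (by omega), ← hstay r h1 h2 h3]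
      exact hv.distinct.ne (by omega) (by omega) (by omega)
    · rw [if_pos (by omega), if_pos (by omega)]
      exact hr2.sle (fun t ht => isRefl_of_mem_gammaTail hj hjc hci ht)
        (gammaTail_desc n j _) hv1 (by omega)

/-! ### Every filling comes from an admissible pair -/

/-- If the chain splits into factors `fac s` and every element good for the next factor can be
lifted to an element good for the current one, then there is a path along the whole chain passing
through good elements at the beginning of every factor. -/
lemma realize {σ : Type*} (fac : σ → List (ℕ × ℤ)) (Good : σ → List ℤ → Prop) (S : List σ)
    (hS : S.IsChain fun s s' => ∀ u, Good s' u → ∃ u', Good s u' ∧ Reach (fac s) u' u)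
    (hlast : ∀ s ∈ S.getLast?, ∃ u, Good s u) :
    ∃ P, IsPath (S.flatMap fac) P ∧
      ∀ pre s post, S = pre ++ s :: post → Good s (P (pre.flatMap fac).length) := by
  induction S with
  | nil => exact ⟨fun _ => [], fun m hm => by simp at hm, fun pre s post h => by simp at h⟩
  | cons s S ih =>
    cases S with
    | nil =>
      obtain ⟨u, hu⟩ := hlast s (by simp)
      refine ⟨fun _ => u, fun m _ => Or.inl rfl, ?_⟩
      intro pre s' post h
      cases pre with
      | nil => obtain ⟨rfl, -⟩ := List.cons.inj h; exact hu
      | cons a pre => simp at h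
    | cons s₂ S =>
      rw [List.isChain_cons_cons] at hS
      obtain ⟨q, hq, hq'⟩ := ih hS.2 (by simpa using hlast)
      obtain ⟨u, hu, hr⟩ := hS.1 _ (hq' [] s₂ S rfl)
      obtain ⟨p, hp, hp0, hp1⟩ := path_of_reach hr
      obtain ⟨P, hP, hPp, hPq⟩ := path_append hp hq hp1
      refine ⟨P, hP, ?_⟩
      intro pre s' post h
      cases pre with
      | nil =>
        obtain ⟨rfl, -⟩ := List.cons.inj h
        rw [List.flatMap_nil, List.length_nil, hPp 0 (Nat.zero_le _), hp0]
        exact hu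
      | cons a pre =>
        obtain ⟨rfl, h'⟩ := List.cons.inj h
        rw [List.flatMap_cons, List.length_append, hPq]
        exact hq' pre s' post h'

section Lift
variable {n : ℕ} {lam : Fin n → ℕ} {F : Filling}

/-- The column of `F` at the beginning of the factor `s`. In the last block `Γ^1` the filling only
records `C_{1,1}`, and the path is constant along the unprimed factors there. -/
def colAt (F : Filling) (s : Bool × ℕ × ℕ) : List ℤ :=
  if s.1 then F.Cp s.2.1 s.2.2 else F.Cu s.2.1 (if s.2.1 = 1 then 1 else s.2.2)

/-- `u` is a signed permutation whose window begins with the column of `F` at the factor `s`. -/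
def Good (n : ℕ) (lam : Fin n → ℕ) (F : Filling) (s : Bool × ℕ × ℕ) (u : List ℤ) : Prop :=
  IsWin n u ∧ u.take (conj n lam s.2.1) = colAt F s

/-- Passing from the right neighbour of `C'_{ik}` back to `C'_{ik}`. -/
lemma extP (hF : F ∈ FSet n lam) {i k : ℕ} (h : validP n lam i k) {u : List ℤ} (hu : IsWin n u)
    (hE : u.take (conj n lam i) = CpNxt n lam F i k) :
    ∃ u', Good n lam F (true, i, k) u' ∧ Reach (fac n lam (true, i, k)) u' u := by
  obtain ⟨hs, -, -, -, hrow, -, -, -, htr, -⟩ := hF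
  obtain ⟨R, hR, hc⟩ := htr i k h
  have hrow' : ∀ p < conj n lam i, p ≠ k - 1 → sle (u.getD p 0) ((F.Cp i k).getD p 0) := by
    intro p hp _
    have := hrow i k h (p + 1) (by omega) hp
    rwa [← hE, getD_take, Nat.add_sub_cancel, if_pos hp] at this
  obtain ⟨u', h1, h2, h3⟩ :=
    exists_lift_cycle hu ((hs i k).1 h) (conj_le i) hR (hE.trans hc) hrow'
  exact ⟨u', ⟨h1, h2⟩, h3⟩

/-- Passing from the right neighbour of `C_{ij}` back to `C_{ij}`, for `i ≥ 2`: the change of the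
entry in position `j` is undone before the cycle. -/
lemma extU (hF : F ∈ FSet n lam) {i j : ℕ} (hi : 2 ≤ i) (h : validU n lam i j) {u : List ℤ}
    (hu : IsWin n u) (hE : u.take (conj n lam i) = (CuNxt n lam F i j).take (conj n lam i)) :
    ∃ u', Good n lam F (false, i, j) u' ∧ Reach (fac n lam (false, i, j)) u' u := by
  obtain ⟨-, hs, -, hent, -, hrow, -, hdist, -, htr⟩ := hF
  obtain ⟨R, hR, h1, -, h3⟩ := htr i j hi h
  obtain ⟨hj, hjd⟩ := hR.2.2
  have hd : conj n lam i ≤ n := conj_le i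
  have hlen := (hs i j).1 h
  rw [← hE] at h1 h3
  have hDrefl : ∀ r ∈ R, IsRefl (conj n lam i) (r, -(j : ℤ)) := by
    intro r hr
    apply isRefl_of_mem_gammaPrime hjd
    rw [mem_gammaPrime]
    have := hR.2.1 r hr
    exact ⟨r, this.1, this.2, rfl⟩
  have hD : conj n lam i = (cycleApply (F.Cu i j) R j).length ∧
      colDistinct (cycleApply (F.Cu i j) R j) ∧
      ∀ a ∈ cycleApply (F.Cu i j) R j, 1 ≤ a.natAbs ∧ a.natAbs ≤ n := by
    refine cycleApply_induct (fun D => conj n lam i = D.length ∧ colDistinct D ∧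
      ∀ a ∈ D, 1 ≤ a.natAbs ∧ a.natAbs ≤ n) R ?_ _ ⟨hlen.symm, hdist i j h, hent i j h⟩
    rintro x r hr ⟨g1, g2, g3⟩
    exact ⟨g1.trans (length_applyRefl _ _).symm,
      colDistinct_applyRefl (hDrefl r hr) g1.le g2, entries_applyRefl (hDrefl r hr) g1.le g3⟩
  have heq : ∀ p < conj n lam i, p ≠ j - 1 →
      u.getD p 0 = (cycleApply (F.Cu i j) R j).getD p 0 := by
    intro p hp hpj
    have := h1 (p + 1) (by omega) hp (by omega)
    rwa [getD_take, Nat.add_sub_cancel, if_pos hp] at this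
  rw [getD_take, if_pos (by omega)] at h3
  obtain ⟨v, hv, hvD, hvu⟩ := exists_lift_tail hu hj hjd hd hD.1.symm hD.2.1 hD.2.2 heq h3
  have hrow' : ∀ p < conj n lam i, p ≠ j - 1 → sle (v.getD p 0) ((F.Cu i j).getD p 0) := by
    intro p hp hpj
    have e : v.getD p 0 = (cycleApply (F.Cu i j) R j).getD p 0 := by
      rw [← hvD, getD_take, if_pos hp]
    have e' : (CuNxt n lam F i j).getD p 0 = u.getD p 0 := by
      have := congrArg (fun l => l.getD p 0) hE
      simp only [getD_take, if_pos hp] at this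
      exact this.symm
    have := hrow i j hi h (p + 1) (by omega) hp
    rwa [Nat.add_sub_cancel, e', heq p hp hpj, ← e] at this
  obtain ⟨u', g1, g2, g3⟩ := exists_lift_cycle hv hlen hd hR hvD hrow'
  refine ⟨u', ⟨g1, ?_⟩, ?_⟩
  · rw [colAt, if_neg (by simp), if_neg (by simp only; omega)]
    exact g2
  · change Reach (gammaJK n j (conj n lam i)) u' u
    rw [gammaJK_eq]
    exact g3.append hvu

lemma head?_blockSteps {c i : ℕ} (hc : 1 ≤ c) :
    (blockSteps c i).head? = some (if 2 ≤ c then (true, i, 2) else (false, i, 1)) := by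
  split_ifs with h
  · obtain ⟨m, rfl⟩ : ∃ m, c = m + 2 := ⟨c - 2, by omega⟩
    rw [blockSteps, show m + 2 - 1 = m + 1 by omega, List.range_succ_eq_map]
    rfl
  · obtain rfl : c = 1 := by omega
    rfl

lemma getLast?_blockSteps {c i : ℕ} (hc : 1 ≤ c) :
    (blockSteps c i).getLast? = some (false, i, c) := by
  obtain ⟨m, rfl⟩ : ∃ m, c = m + 1 := ⟨c - 1, by omega⟩
  rw [blockSteps, List.range_succ (n := m), List.map_append, ← List.append_assoc]
  simp

lemma isChain_block (hF : F ∈ FSet n lam) {i : ℕ} (hi : 1 ≤ i) (hi' : i ≤ lamOne n lam) :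
    (blockSteps (conj n lam i) i).IsChain fun s s' =>
      ∀ u, Good n lam F s' u → ∃ u', Good n lam F s u' ∧ Reach (fac n lam s) u' u := by
  have hc := one_le_conj hi hi'
  rw [blockSteps, List.isChain_append]
  refine ⟨?_, ?_, ?_⟩
  · rw [List.isChain_map, List.isChain_range]
    intro m hm u hu
    refine extP hF ⟨hi, hi', by omega, by omega⟩ hu.1 ?_
    rw [CpNxt, if_pos (by omega)]
    exact hu.2
  · rw [List.isChain_map, List.isChain_range]
    intro m hm u hu
    by_cases h1 : i = 1
    · refine ⟨u, ⟨hu.1, ?_⟩, Reach.refl _ _⟩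
      have := hu.2
      simp only [colAt, h1, if_true] at this ⊢
      exact this
    · refine extU hF (by omega) ⟨hi, hi', by omega, by omega, by omega⟩ hu.1 ?_
      rw [CuNxt, if_pos (by omega)]
      have := hu.2
      simp only [colAt, h1, if_false] at this
      change List.take (conj n lam i) u = F.Cu i (m + 1 + 1) at this
      rw [← this, List.take_take, min_self]
  · intro s hs s' hs'
    obtain ⟨c, hcc⟩ : ∃ c, conj n lam i = c + 1 := ⟨conj n lam i - 1, by omega⟩
    rw [hcc, List.range_succ_eq_map, List.map_cons, List.head?_cons] at hs'
    cases c with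
    | zero => rw [hcc] at hs; simp at hs
    | succ c =>
      rw [hcc, show c + 1 + 1 - 1 = c + 1 by omega, List.range_succ] at hs
      simp at hs hs'
      subst hs hs'
      intro u hu
      refine extP hF ⟨hi, hi', by omega, by omega⟩ hu.1 ?_
      rw [CpNxt, if_neg (by omega)]
      have := hu.2
      simpa [colAt] using this

lemma isChain_stepsDown (hF : F ∈ FSet n lam) {L : ℕ} (hL : L ≤ lamOne n lam) :
    (stepsDown n lam L).IsChain fun s s' =>
      ∀ u, Good n lam F s' u → ∃ u', Good n lam F s u' ∧ Reach (fac n lam s) u' u := by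
  induction L with
  | zero => exact List.isChain_nil
  | succ L ih =>
    rw [stepsDown, List.isChain_append]
    refine ⟨isChain_block hF (by omega) hL, ih (by omega), ?_⟩
    intro s hs s' hs'
    have hc := one_le_conj (n := n) (lam := lam) (i := L + 1) (by omega) hL
    rw [getLast?_blockSteps hc, Option.mem_some_iff] at hs
    subst hs
    cases L with
    | zero => simp [stepsDown] at hs'
    | succ L =>
      have hc' := one_le_conj (n := n) (lam := lam) (i := L + 1) (by omega) (by omega)
      rw [stepsDown, List.head?_append, head?_blockSteps hc', Option.some_or,
        Option.mem_some_iff] at hs'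
      intro u hu
      refine extU hF (by omega) ⟨by omega, hL, hc, le_rfl, by omega⟩ hu.1 ?_
      have hanti := conj_anti (n := n) (lam := lam) (show L + 1 ≤ L + 1 + 1 by omega)
      have h2 := hu.2
      rw [CuNxt, if_neg (by omega), Nat.add_sub_cancel]
      split_ifs at hs' ⊢ with hc2
      · subst hs'
        have e : List.take (conj n lam (L + 1)) u = F.Cp (L + 1) 2 := h2
        rw [← e, List.take_take, min_eq_left hanti]
      · subst hs'
        have e : List.take (conj n lam (L + 1)) u = F.Cu (L + 1) 1 := by
          simpa [colAt] using h2
        rw [← e, List.take_take, min_eq_left hanti]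

lemma getLast?_stepsDown {L : ℕ} (hL : 1 ≤ L) (hL' : L ≤ lamOne n lam) :
    (stepsDown n lam L).getLast? = some (false, 1, conj n lam 1) := by
  induction L with
  | zero => omega
  | succ L ih =>
    rw [stepsDown, List.getLast?_append]
    cases L with
    | zero =>
      rw [getLast?_blockSteps (one_le_conj le_rfl hL')]
      rfl
    | succ L => rw [ih (by omega) (by omega)]; rfl

/-- The path is built from right to left, starting with `C_{1,1}`, which has height `n` and hence is
a full window. -/
theorem exists_of_mem_FSet (hn : 1 ≤ n) (hpos : ∀ i, 0 < lam i) (hF : F ∈ FSet n lam) :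
    ∃ w J, (w, J) ∈ ASet n lam ∧ fMap n lam w J = F := by
  have hL : 1 ≤ lamOne n lam :=
    (hpos ⟨0, hn⟩).trans_le (Finset.le_sup (f := lam) (Finset.mem_univ _))
  have h11 : validU n lam 1 1 :=
    ⟨le_rfl, hL, le_rfl, one_le_conj le_rfl hL, fun _ => rfl⟩
  have hc1 := conj_one hpos
  obtain ⟨P, hP, hPg⟩ := realize (fac n lam) (Good n lam F) _ (isChain_stepsDown hF le_rfl) (by
    intro s hs
    rw [getLast?_stepsDown hL le_rfl, Option.mem_some_iff] at hs
    subst hs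
    obtain ⟨-, hs, -, hent, -, -, -, hdist, -, -⟩ := hF
    have hlen := (hs 1 1).1 h11
    refine ⟨F.Cu 1 1, ⟨hlen.trans hc1, hent 1 1 h11, hdist 1 1 h11⟩, ?_⟩
    simp only [colAt]
    exact List.take_of_length_le hlen.le)
  rw [← lambdaChain_eq] at hP
  obtain ⟨J, hJ, hdec, happ⟩ := decChain_of_path _ P hP
  have h0 : IsWin n (P 0) := by
    cases hS : stepsDown n lam (lamOne n lam) with
    | nil => have := getLast?_stepsDown (n := n) (lam := lam) hL le_rfl; simp [hS] at this
    | cons s S => exact (hPg [] s S hS).1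
  refine ⟨P 0, J, ⟨mem_of_isWin h0, hJ, hdec⟩, ?_⟩
  have hCp : (fMap n lam (P 0) J).Cp = F.Cp := by
    funext i k
    by_cases h : validP n lam i k
    · obtain ⟨pre, post, e1, e2⟩ := exists_stepP h
      have hle := offset_le_of_decomp (n := n) (lam := lam) e1
      rw [← lambdaChain_eq, e2] at hle
      have := (hPg _ _ _ e1).2
      rw [e2, ← happ _ hle] at this
      exact (if_pos h).trans this
    · exact (if_neg h).trans ((hF.1 i k).2 h).symm
  have hCu : (fMap n lam (P 0) J).Cu = F.Cu := by
    funext i j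
    by_cases h : validU n lam i j
    · obtain ⟨pre, post, e1, e2⟩ := exists_stepU h.1 h.2.1 h.2.2.1 h.2.2.2.1
      have hle := offset_le_of_decomp (n := n) (lam := lam) e1
      rw [← lambdaChain_eq, e2] at hle
      have := (hPg _ _ _ e1).2
      rw [e2, ← happ _ hle] at this
      refine (if_pos h).trans (this.trans ?_)
      change F.Cu i (if i = 1 then 1 else j) = F.Cu i j
      split_ifs with h1
      · rw [h.2.2.2.2 h1]
      · rfl
    · exact (if_neg h).trans ((hF.2.1 i j).2 h).symm
  calc fMap n lam (P 0) J
      = ⟨(fMap n lam (P 0) J).Cp, (fMap n lam (P 0) J).Cu⟩ := rfl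
    _ = F := by rw [hCp, hCu]

end Lift

/-- Theorem 4.5 (1): `f(A(λ)) = F(λ)`. -/
theorem fillingMap_image (n : ℕ) (hn : 2 ≤ n) (lam : Fin n → ℕ)
    (hstrict : ∀ i j : Fin n, i < j → lam j < lam i) (hpos : ∀ i, 0 < lam i) :
    (fun p : List ℤ × Finset ℕ => fMap n lam p.1 p.2) '' ASet n lam = FSet n lam := by
  ext F
  constructor
  · rintro ⟨⟨w, J⟩, h, rfl⟩
    exact fMap_mem_FSet h
  · intro hF
    obtain ⟨w, J, h, e⟩ := exists_of_mem_FSet (by omega) hpos hF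
    exact ⟨(w, J), h, e⟩

end HL
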